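/- Assume Var_n/n → ∞ as n → ∞. Let α ∈ (1,2), let h be slowly varying at infinity, and set d_α := α(α−1)/(2·Γ(3−α)). Then Var_n ~ n^α h(n) as n → ∞ if and only if ν((1−x,1]) ~ d_α·x^{2−α}·h(1/x) as x → 0⁺. -/

import Mathlib

open MeasureTheory Filter Topology Set

/-- A function `h : (0,∞) → (0,∞)` is slowly varying at infinity: positive and
continuous on `(0,∞)` with `h(st)/h(t) → 1` as `t → ∞` for every `s > 0`. -/
def SlowlyVaryingAtTop (h : ℝ → ℝ) : Prop :=
  (∀ t > 0, 0 < h t) ∧ ContinuousOn h (Set.Ioi 0) ∧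
    ∀ s > 0, Tendsto (fun t => h (s * t) / h t) atTop (𝓝 1)

/-- The variance sequence `Var_n = ∫ (n + 2 ∑_{k=1}^{n-1} (n-k) λ^k) ν(dλ)`. -/
noncomputable def VarSeqR (ν : Measure ℝ) (n : ℕ) : ℝ :=
  ∫ l, ((n : ℝ) + 2 * ∑ k ∈ Finset.Ico 1 n, ((n : ℝ) - (k : ℝ)) * l ^ k) ∂ν

/-!
Write `λ = exp (-x)` near the edge `1` and let `F x = ν (exp (-x), 1]`. Up to `O(n)`, `Var_n` is
`2 ∑ (n - k) m_k`, where the moments `m_k = ∫ λ ^ k dν` over `(0, 1]` are Laplace transforms of `F`.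

*Tail to variance.* If `F` is regularly varying at `0` with index `β`, then
`m_k ~ Γ(β + 1) F(1 / k)`. The sum divided by `n² F(1 / n)` is then a Riemann sum of
`2 Γ(β + 1) (1 - r) r ^ (-β)` on `(0, 1)`, and Potter bounds justify the passage to the limit.

*Variance to tail.* The second difference of `Var` along `kn, (k + 1)n, (k + 2)n` is, up to `O(1)`,
the `k`-th moment in `λ ^ n` of the positive measure `2 λ (1 + ⋯ + λ ^ (n - 1))² dν`. If `Var` is
regularly varying, these moments, normalised by `Var_n`, have the same limit for `ν` as for a
measure whose tail is exactly `x ^ β`. By Weierstrass approximation the two families of block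
measures agree asymptotically on every continuous function of `λ ^ n ∈ [0, 1]`. Near-indicators of
`λ ^ n > exp (-b)` transfer the tail asymptotics from the reference measure to `ν`.
-/

/-! ### Slow variation -/

section SlowVariation

lemma exists_forall_abs_add_sub_le {f : ℝ → ℝ} (hf : Continuous f)
    (hlim : ∀ u, Tendsto (fun x => f (x + u) - f x) atTop (𝓝 0)) {ε : ℝ} (hε : 0 < ε) :
    ∃ δ > 0, ∃ X, ∀ x ≥ X, ∀ u ∈ Icc 0 δ, |f (x + u) - f x| ≤ ε := by
  let E : ℕ → Set ℝ := fun N => ⋂ x ≥ (N : ℝ), {u | |f (x + u) - f x| ≤ ε / 2}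
  have hE_closed (N : ℕ) : IsClosed (E N) :=
    isClosed_biInter fun x _ => isClosed_le (by fun_prop) continuous_const
  have hE_univ : ⋃ N, E N = univ := by
    refine eq_univ_of_forall fun u => mem_iUnion.2 ?_
    obtain ⟨X, hX⟩ := eventually_atTop.1 ((hlim u).abs.eventually_le_const (u := ε / 2)
      (by simpa using half_pos hε))
    obtain ⟨N, hN⟩ := exists_nat_ge X
    exact ⟨N, mem_iInter₂.2 fun x hx => hX x (hN.trans hx)⟩
  -- Baire: some `E N` contains a ball, and two points of it control every small shift.
  obtain ⟨N, a, ha⟩ := nonempty_interior_of_iUnion_of_closed hE_closed hE_univ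
  obtain ⟨δ, hδ, hball⟩ := Metric.isOpen_iff.1 isOpen_interior a ha
  refine ⟨δ / 2, by positivity, N + a, fun x hx u hu => ?_⟩
  have hau : a + u ∈ E N := interior_subset <| hball <| by
    rw [Metric.mem_ball, Real.dist_eq, add_sub_cancel_left, abs_of_nonneg hu.1]; linarith [hu.2]
  have h₁ : |f (x - a + (a + u)) - f (x - a)| ≤ ε / 2 := mem_iInter₂.1 hau (x - a) (by linarith)
  have h₂ : |f (x - a + a) - f (x - a)| ≤ ε / 2 :=
    mem_iInter₂.1 (interior_subset ha) (x - a) (by linarith)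
  rw [← add_assoc, sub_add_cancel] at h₁
  rw [sub_add_cancel] at h₂
  calc |f (x + u) - f x| = |(f (x + u) - f (x - a)) - (f x - f (x - a))| := by congr 1; ring
    _ ≤ |f (x + u) - f (x - a)| + |f x - f (x - a)| := abs_sub _ _
    _ ≤ ε := by linarith

lemma tendsto_sub_zero_of_tendsto_add_sub {f : ℝ → ℝ} (hf : Continuous f)
    (hlim : ∀ u, Tendsto (fun x => f (x + u) - f x) atTop (𝓝 0))
    {ι : Type*} {l : Filter ι} {v w : ι → ℝ} (hw : Tendsto w l atTop) {u : ℝ}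
    (hvw : Tendsto (fun i => v i - w i) l (𝓝 u)) :
    Tendsto (fun i => f (v i) - f (w i)) l (𝓝 0) := by
  have hv : Tendsto v l atTop := by simpa using hvw.add_atTop hw
  have hwu : Tendsto (fun i => w i + u) l atTop := tendsto_atTop_add_const_right _ _ hw
  suffices Tendsto (fun i => f (v i) - f (w i + u)) l (𝓝 0) by
    simpa using this.add ((hlim u).comp hw)
  rw [Metric.tendsto_nhds]
  intro ε hε
  obtain ⟨δ, hδ, X, hX⟩ := exists_forall_abs_add_sub_le hf hlim (half_pos hε)
  filter_upwards [hwu.eventually_ge_atTop X, hv.eventually_ge_atTop X,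
    Metric.tendsto_nhds.1 hvw δ hδ] with i hwX hvX hclose
  rw [Real.dist_eq, sub_sub] at hclose
  rw [dist_zero_right, Real.norm_eq_abs]
  suffices |f (v i) - f (w i + u)| ≤ ε / 2 by linarith
  rcases le_total (w i + u) (v i) with hle | hle
  · simpa using hX (w i + u) hwX (v i - (w i + u)) ⟨by linarith, (le_abs_self _).trans hclose.le⟩
  · rw [abs_sub_comm] at hclose ⊢
    simpa using hX (v i) hvX (w i + u - v i) ⟨by linarith, (le_abs_self _).trans hclose.le⟩

lemma tendsto_atTop_of_tendsto_add_one_sub {g : ℝ → ℝ} (hg : Continuous g) {c : ℝ} (hc : 0 < c)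
    (hlim : Tendsto (fun x => g (x + 1) - g x) atTop (𝓝 c)) : Tendsto g atTop atTop := by
  obtain ⟨X, hX⟩ := eventually_atTop.1 (hlim.eventually_const_le (half_lt_self hc))
  obtain ⟨m, hm⟩ := (isCompact_Icc.image hg).bddBelow (s := g '' Icc X (X + 1))
  have hstep (n : ℕ) : ∀ y ∈ Icc X (X + 1), m + n * (c / 2) ≤ g (y + n) := by
    intro y hy
    induction n with
    | zero => simpa using hm (mem_image_of_mem g hy)
    | succ n ih =>
      have := hX (y + n) (by linarith [hy.1, n.cast_nonneg (α := ℝ)])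
      push_cast
      rw [← add_assoc y]
      linarith
  refine tendsto_atTop_mono' atTop (f₁ := fun x => m + (x - X - 1) * (c / 2)) ?_ ?_
  · filter_upwards [eventually_ge_atTop X] with x hx
    have hfloor := Nat.floor_le (sub_nonneg.2 hx)
    have hlt := Nat.lt_floor_add_one (x - X)
    have := hstep ⌊x - X⌋₊ (x - ⌊x - X⌋₊) ⟨by linarith, by linarith⟩
    rw [sub_add_cancel] at this
    refine le_trans ?_ this
    gcongr
    linarith
  · simp only [sub_sub]
    exact tendsto_atTop_add_const_left _ _
      ((tendsto_atTop_add_const_right _ _ tendsto_id).atTop_mul_const (half_pos hc))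

namespace SlowlyVaryingAtTop

variable {h : ℝ → ℝ}

lemma continuous_log_comp_exp (hh : SlowlyVaryingAtTop h) :
    Continuous fun x => Real.log (h (Real.exp x)) :=
  (hh.2.1.comp_continuous Real.continuous_exp fun x => Real.exp_pos x).log
    fun x => (hh.1 _ (Real.exp_pos x)).ne'

lemma tendsto_log_comp_exp_add_sub (hh : SlowlyVaryingAtTop h) (u : ℝ) :
    Tendsto (fun x => Real.log (h (Real.exp (x + u))) - Real.log (h (Real.exp x))) atTop (𝓝 0) := by
  have hlog := ((hh.2.2 _ (Real.exp_pos u)).comp Real.tendsto_exp_atTop).log one_ne_zero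
  rw [Real.log_one] at hlog
  refine hlog.congr fun x => ?_
  rw [Function.comp_apply, Real.log_div (hh.1 _ (by positivity)).ne' (hh.1 _ (by positivity)).ne',
    add_comm x, Real.exp_add]

lemma tendsto_div (hh : SlowlyVaryingAtTop h) {ι : Type*} {l : Filter ι} {v w : ι → ℝ}
    (hw : Tendsto w l atTop) {s : ℝ} (hs : 0 < s) (hvw : Tendsto (fun i => v i / w i) l (𝓝 s)) :
    Tendsto (fun i => h (v i) / h (w i)) l (𝓝 1) := by
  have hpos : ∀ᶠ i in l, 0 < w i ∧ 0 < v i := by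
    filter_upwards [hw.eventually_gt_atTop 0, hvw.eventually_const_lt hs] with i hwi hvi
    exact ⟨hwi, (div_pos_iff_of_pos_right hwi).1 hvi⟩
  have hlog : Tendsto (fun i => Real.log (v i) - Real.log (w i)) l (𝓝 (Real.log s)) := by
    refine (hvw.log hs.ne').congr' ?_
    filter_upwards [hpos] with i ⟨hwi, hvi⟩
    rw [Real.log_div hvi.ne' hwi.ne']
  have hexp := (tendsto_sub_zero_of_tendsto_add_sub hh.continuous_log_comp_exp
    hh.tendsto_log_comp_exp_add_sub (Real.tendsto_log_atTop.comp hw) hlog).rexp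
  rw [Real.exp_zero] at hexp
  refine hexp.congr' ?_
  filter_upwards [hpos] with i ⟨hwi, hvi⟩
  simp only [Function.comp_apply, Real.exp_log hwi, Real.exp_log hvi]
  rw [Real.exp_sub, Real.exp_log (hh.1 _ hwi), Real.exp_log (hh.1 _ hvi)]

lemma tendsto_rpow_mul_atTop (hh : SlowlyVaryingAtTop h) {ρ : ℝ} (hρ : 0 < ρ) :
    Tendsto (fun t => t ^ ρ * h t) atTop atTop := by
  have hlog : Tendsto (fun x => ρ * x + Real.log (h (Real.exp x))) atTop atTop := by
    refine tendsto_atTop_of_tendsto_add_one_sub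
      ((continuous_const_mul ρ).add hh.continuous_log_comp_exp) hρ ?_
    have := (hh.tendsto_log_comp_exp_add_sub 1).const_add ρ
    rw [add_zero] at this
    exact this.congr fun x => by ring
  refine (Real.tendsto_exp_atTop.comp (hlog.comp Real.tendsto_log_atTop)).congr' ?_
  filter_upwards [eventually_gt_atTop 0] with t ht
  simp only [Function.comp_apply]
  rw [Real.exp_add, Real.exp_log ht, Real.exp_log (hh.1 t ht), Real.rpow_def_of_pos ht, mul_comm ρ]

end SlowlyVaryingAtTop

end SlowVariation

/-! ### Regular variation at zero -/

section RegularVariation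

/-- `F` is regularly varying at `0⁺` with exponent `β`. Since `a / 0 = 0`, the condition at `y = 1`
forces `F x ≠ 0` for small `x > 0`. -/
def RegularlyVaryingAtZero (F : ℝ → ℝ) (β : ℝ) : Prop :=
  ∀ y > 0, Tendsto (fun x => F (y * x) / F x) (𝓝[>] 0) (𝓝 (y ^ β))

/-- The model function `x ^ β * h (1 / x)` of regular variation at `0⁺`, for `h` slowly varying
at infinity. -/
noncomputable def regVarModel (h : ℝ → ℝ) (β x : ℝ) : ℝ := x ^ β * h (1 / x)

section Model

variable {h : ℝ → ℝ} {β : ℝ}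

lemma SlowlyVaryingAtTop.regVarModel_pos (hh : SlowlyVaryingAtTop h) (β : ℝ) {x : ℝ}
    (hx : 0 < x) : 0 < regVarModel h β x :=
  mul_pos (Real.rpow_pos_of_pos hx β) (hh.1 _ (one_div_pos.2 hx))

lemma SlowlyVaryingAtTop.tendsto_regVarModel_div (hh : SlowlyVaryingAtTop h) (β : ℝ)
    {ι : Type*} {l : Filter ι} {u x : ι → ℝ} (hx : Tendsto x l (𝓝[>] 0)) {r : ℝ} (hr : 0 < r)
    (hux : Tendsto (fun i => u i / x i) l (𝓝 r)) :
    Tendsto (fun i => regVarModel h β (u i) / regVarModel h β (x i)) l (𝓝 (r ^ β)) := by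
  have hslow : Tendsto (fun i => h (1 / u i) / h (1 / x i)) l (𝓝 1) := by
    refine hh.tendsto_div ?_ (inv_pos.2 hr) ((hux.inv₀ hr.ne').congr fun i => ?_)
    · simp only [one_div]
      exact tendsto_inv_nhdsGT_zero.comp hx
    · rw [inv_div, one_div, one_div, div_inv_eq_mul, mul_comm, div_eq_mul_inv]
  have hmul := (hux.rpow_const (p := β) (Or.inl hr.ne')).mul hslow
  rw [mul_one] at hmul
  refine hmul.congr' ?_
  filter_upwards [hx.eventually self_mem_nhdsWithin, hux.eventually_const_lt hr] with i hxi hui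
  have hui : 0 < u i := (div_pos_iff_of_pos_right hxi).1 hui
  rw [Real.div_rpow hui.le (le_of_lt hxi), div_mul_div_comm, regVarModel, regVarModel]

lemma SlowlyVaryingAtTop.tendsto_div_regVarModel_comp (hh : SlowlyVaryingAtTop h)
    {F : ℝ → ℝ} {d : ℝ} (hF : Tendsto (fun x => F x / regVarModel h β x) (𝓝[>] 0) (𝓝 d))
    {ι : Type*} {l : Filter ι} {u x : ι → ℝ} (hx : Tendsto x l (𝓝[>] 0)) {r : ℝ} (hr : 0 < r)
    (hux : Tendsto (fun i => u i / x i) l (𝓝 r)) :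
    Tendsto (fun i => F (u i) / regVarModel h β (x i)) l (𝓝 (d * r ^ β)) := by
  have hxpos : ∀ᶠ i in l, 0 < x i := hx.eventually self_mem_nhdsWithin
  have hupos : ∀ᶠ i in l, 0 < u i := by
    filter_upwards [hxpos, hux.eventually_const_lt hr] with i hxi hui
    exact (div_pos_iff_of_pos_right hxi).1 hui
  have hu : Tendsto u l (𝓝[>] 0) := by
    refine tendsto_nhdsWithin_iff.2 ⟨?_, hupos⟩
    have hmul := hux.mul (hx.mono_right nhdsWithin_le_nhds)
    rw [mul_zero] at hmul
    refine hmul.congr' ?_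
    filter_upwards [hxpos] with i hxi
    exact div_mul_cancel₀ _ hxi.ne'
  refine ((hF.comp hu).mul (hh.tendsto_regVarModel_div β hx hr hux)).congr' ?_
  filter_upwards [hupos] with i hui
  exact div_mul_div_cancel₀ (hh.regVarModel_pos β hui).ne'

lemma SlowlyVaryingAtTop.regularlyVaryingAtZero_of_tendsto_div (hh : SlowlyVaryingAtTop h)
    {F : ℝ → ℝ} {d : ℝ} (hd : d ≠ 0)
    (hF : Tendsto (fun x => F x / regVarModel h β x) (𝓝[>] 0) (𝓝 d)) :
    RegularlyVaryingAtZero F β := by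
  intro y hy
  have hnum := hh.tendsto_div_regVarModel_comp hF tendsto_id hy (u := fun x => y * x) <|
    (tendsto_congr' <| by
      filter_upwards [self_mem_nhdsWithin] with x hx
      exact mul_div_cancel_right₀ y (ne_of_gt hx)).2 tendsto_const_nhds
  have hdiv := hnum.div hF hd
  rw [mul_div_cancel_left₀ _ hd] at hdiv
  refine hdiv.congr' ?_
  filter_upwards [self_mem_nhdsWithin] with x hx
  exact div_div_div_cancel_right₀ (hh.regVarModel_pos β hx).ne' _ _

lemma SlowlyVaryingAtTop.tendsto_div_regVarModel_of_nat (hh : SlowlyVaryingAtTop h)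
    {F : ℝ → ℝ} (hmono : Monotone F) {d : ℝ}
    (hF : Tendsto (fun n : ℕ => F (1 / n) / regVarModel h β (1 / n)) atTop (𝓝 d)) :
    Tendsto (fun x => F x / regVarModel h β x) (𝓝[>] 0) (𝓝 d) := by
  have hlim {N : ℝ → ℕ} (hN : Tendsto (fun t : ℝ => (N t : ℝ) / t) atTop (𝓝 1)) :
      Tendsto (fun x : ℝ => F (1 / N x⁻¹) / regVarModel h β x) (𝓝[>] 0) (𝓝 d) := by
    have hNinv := hN.comp (tendsto_inv_nhdsGT_zero (𝕜 := ℝ))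
    have hNtop : Tendsto (fun x : ℝ => N x⁻¹) (𝓝[>] 0) atTop := by
      refine tendsto_natCast_atTop_iff (R := ℝ) |>.1 ?_
      refine (hNinv.pos_mul_atTop one_pos tendsto_inv_nhdsGT_zero).congr' ?_
      filter_upwards [self_mem_nhdsWithin] with x hx
      exact div_mul_cancel₀ _ (inv_ne_zero (ne_of_gt hx))
    have hratio : Tendsto (fun x : ℝ => 1 / (N x⁻¹ : ℝ) / x) (𝓝[>] 0) (𝓝 1) := by
      have hinv := hNinv.inv₀ one_ne_zero
      rw [inv_one] at hinv
      refine hinv.congr fun x => ?_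
      rw [Function.comp_apply, div_inv_eq_mul, mul_inv, one_div, div_eq_mul_inv]
    have hmul := (hF.comp hNtop).mul (hh.tendsto_regVarModel_div β tendsto_id one_pos hratio)
    rw [Real.one_rpow, mul_one] at hmul
    refine hmul.congr' ?_
    filter_upwards [hNtop.eventually_gt_atTop 0] with x hNpos
    exact div_mul_div_cancel₀ (hh.regVarModel_pos β (by positivity)).ne'
  refine tendsto_of_tendsto_of_tendsto_of_le_of_le' (hlim (tendsto_nat_ceil_div_atTop (R := ℝ)))
    (hlim (tendsto_nat_floor_div_atTop (R := ℝ))) ?_ ?_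
  · filter_upwards [self_mem_nhdsWithin] with x (hx : 0 < x)
    have hle : 1 / (⌈x⁻¹⌉₊ : ℝ) ≤ x := by
      rw [one_div]
      exact inv_le_of_inv_le₀ hx (Nat.le_ceil _)
    exact div_le_div_of_nonneg_right (hmono hle) (hh.regVarModel_pos β hx).le
  · filter_upwards [Ioo_mem_nhdsGT one_pos] with x ⟨hx, hx1⟩
    have hle : x ≤ 1 / (⌊x⁻¹⌋₊ : ℝ) := by
      rw [one_div]
      exact le_inv_of_le_inv₀ (mod_cast Nat.floor_pos.2 ((one_lt_inv₀ hx).2 hx1).le)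
        (Nat.floor_le (by positivity))
    exact div_le_div_of_nonneg_right (hmono hle) (hh.regVarModel_pos β hx).le

end Model

namespace RegularlyVaryingAtZero

variable {F : ℝ → ℝ} {β : ℝ}

lemma eventually_pos (hF : RegularlyVaryingAtZero F β) (hF0 : ∀ x, 0 ≤ F x) :
    ∀ᶠ x in 𝓝[>] 0, 0 < F x := by
  have hone := hF 1 one_pos
  rw [Real.one_rpow] at hone
  filter_upwards [hone.eventually_ne one_ne_zero] with x hx
  exact (hF0 x).lt_of_ne' fun h0 => hx (by rw [h0, div_zero])

-- Potter's upper bound, by iterating `F (2 * x) ≤ 2 ^ q * F x`.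
lemma exists_forall_le_rpow_mul_near (hF : RegularlyVaryingAtZero F β) (hmono : Monotone F)
    (hF0 : ∀ x, 0 ≤ F x) {q : ℝ} (hq : 0 < q) (hβq : β < q) :
    ∃ δ > 0, ∀ x > 0, ∀ z ∈ Ico x δ, 0 < F x ∧ F z ≤ 2 ^ q * (z / x) ^ q * F x := by
  obtain ⟨δ, hδ, hsub⟩ := mem_nhdsGT_iff_exists_Ioo_subset.1 <| (hF.eventually_pos hF0).and <|
    (hF 2 two_pos).eventually_le_const (Real.rpow_lt_rpow_of_exponent_lt one_lt_two hβq)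
  have hdouble : ∀ x ∈ Ioo 0 δ, F (2 * x) ≤ 2 ^ q * F x := fun x hx =>
    (div_le_iff₀ (hsub hx).1).1 (hsub hx).2
  refine ⟨δ, hδ, fun x hx z hz => ⟨(hsub ⟨hx, hz.1.trans_lt hz.2⟩).1, ?_⟩⟩
  have hiter (n : ℕ) (hn : 2 ^ n * x < δ) : F (2 ^ (n + 1) * x) ≤ (2 ^ q) ^ (n + 1) * F x := by
    induction n with
    | zero => simpa using hdouble x ⟨hx, by simpa using hn⟩
    | succ n ih =>
      have hlt : 2 ^ n * x < δ :=
        (mul_le_mul_of_nonneg_right (pow_le_pow_right₀ one_le_two n.le_succ) hx.le).trans_lt hn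
      calc F (2 ^ (n + 1 + 1) * x) = F (2 * (2 ^ (n + 1) * x)) := by ring_nf
        _ ≤ 2 ^ q * F (2 ^ (n + 1) * x) := hdouble _ ⟨by positivity, hn⟩
        _ ≤ 2 ^ q * ((2 ^ q) ^ (n + 1) * F x) := by gcongr; exact ih hlt
        _ = (2 ^ q) ^ (n + 1 + 1) * F x := by ring
  obtain ⟨n, hn, hn'⟩ := exists_nat_pow_near ((one_le_div hx).2 hz.1) one_lt_two
  calc F z ≤ F (2 ^ (n + 1) * x) := hmono ((div_lt_iff₀ hx).1 hn').le
    _ ≤ (2 ^ q) ^ (n + 1) * F x := hiter n (((le_div_iff₀ hx).1 hn).trans_lt hz.2)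
    _ = 2 ^ q * (2 ^ n) ^ q * F x := by
      rw [pow_succ', ← Real.rpow_natCast, ← Real.rpow_natCast, ← Real.rpow_mul two_pos.le,
        ← Real.rpow_mul two_pos.le, mul_comm q]
    _ ≤ 2 ^ q * (z / x) ^ q * F x := by have := hF0 x; gcongr

lemma exists_forall_le_rpow_mul (hF : RegularlyVaryingAtZero F β) (hmono : Monotone F)
    (hF0 : ∀ x, 0 ≤ F x) {B : ℝ} (hB : ∀ x, F x ≤ B) {q : ℝ} (hq : 0 < q) (hβq : β < q) :
    ∃ C > 0, ∀ᶠ x in 𝓝[>] 0, ∀ z ≥ x, F z ≤ C * (z / x) ^ q * F x := by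
  obtain ⟨δ, hδ, hnear⟩ := hF.exists_forall_le_rpow_mul_near hmono hF0 hq hβq
  have hδ2 : 0 < δ / 2 := half_pos hδ
  have hFδ : 0 < F (δ / 2) := (hnear (δ / 2) hδ2 (δ / 2) ⟨le_rfl, half_lt_self hδ⟩).1
  have hB1 : 1 ≤ B / F (δ / 2) := (one_le_div hFδ).2 (hB _)
  refine ⟨B / F (δ / 2) * 2 ^ q, by positivity, ?_⟩
  filter_upwards [Ioo_mem_nhdsGT hδ2] with x ⟨hx, hxδ⟩ z hz
  rcases lt_or_ge z δ with hzδ | hzδ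
  · calc F z ≤ 2 ^ q * (z / x) ^ q * F x := (hnear x hx z ⟨hz, hzδ⟩).2
      _ ≤ B / F (δ / 2) * (2 ^ q * (z / x) ^ q * F x) :=
        le_mul_of_one_le_left ((hF0 z).trans (hnear x hx z ⟨hz, hzδ⟩).2) hB1
      _ = B / F (δ / 2) * 2 ^ q * (z / x) ^ q * F x := by ring
  · calc F z ≤ B / F (δ / 2) * F (δ / 2) := (hB z).trans_eq (div_mul_cancel₀ _ hFδ.ne').symm
      _ ≤ B / F (δ / 2) * (2 ^ q * (δ / 2 / x) ^ q * F x) := by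
        gcongr
        exact (hnear x hx (δ / 2) ⟨hxδ.le, half_lt_self hδ⟩).2
      _ ≤ B / F (δ / 2) * (2 ^ q * (z / x) ^ q * F x) := by
        have := hF0 x
        gcongr
        linarith
      _ = B / F (δ / 2) * 2 ^ q * (z / x) ^ q * F x := by ring

lemma exists_forall_mul_le (hF : RegularlyVaryingAtZero F β) (hmono : Monotone F)
    (hF0 : ∀ x, 0 ≤ F x) {B : ℝ} (hB : ∀ x, F x ≤ B) {q : ℝ} (hq : 0 < q) (hβq : β < q) :
    ∃ C > 0, ∀ᶠ x in 𝓝[>] 0, ∀ y > 0, F (y * x) ≤ C * (1 + y ^ q) * F x := by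
  obtain ⟨C, hC, hbound⟩ := hF.exists_forall_le_rpow_mul hmono hF0 hB hq hβq
  refine ⟨C + 1, by positivity, ?_⟩
  filter_upwards [hbound, self_mem_nhdsWithin] with x hx (hx0 : 0 < x) y hy
  have hFx := hF0 x
  have hyq : 0 < y ^ q := Real.rpow_pos_of_pos hy q
  rcases le_total 1 y with h1 | h1
  · calc F (y * x) ≤ C * (y * x / x) ^ q * F x := hx _ (le_mul_of_one_le_left hx0.le h1)
      _ = C * y ^ q * F x := by rw [mul_div_cancel_right₀ _ hx0.ne']
      _ ≤ (C + 1) * (1 + y ^ q) * F x := by gcongr <;> linarith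
  · calc F (y * x) ≤ 1 * 1 * F x := by
          rw [one_mul, one_mul]
          exact hmono (mul_le_of_le_one_left hx0.le h1)
      _ ≤ (C + 1) * (1 + y ^ q) * F x := by gcongr <;> linarith

lemma tendsto_div_atTop (hF : RegularlyVaryingAtZero F β) (hmono : Monotone F)
    (hF0 : ∀ x, 0 ≤ F x) {B : ℝ} (hB : ∀ x, F x ≤ B) (hβ : β < 1) :
    Tendsto (fun x => F x / x) (𝓝[>] 0) atTop := by
  obtain ⟨q, hq, hq1⟩ := exists_between (max_lt hβ one_pos)
  obtain ⟨hβq, hq0⟩ := max_lt_iff.1 hq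
  obtain ⟨C, hC, hbound⟩ := hF.exists_forall_le_rpow_mul hmono hF0 hB hq0 hβq
  obtain ⟨z, hFz, hz⟩ := ((hF.eventually_pos hF0).and self_mem_nhdsWithin).exists
  have hz : 0 < z := hz
  have hpow : Tendsto (fun x : ℝ => F z / (C * z ^ q) * x⁻¹ ^ (1 - q)) (𝓝[>] 0) atTop :=
    ((tendsto_rpow_atTop (by linarith)).comp tendsto_inv_nhdsGT_zero).const_mul_atTop
      (by positivity)
  refine tendsto_atTop_mono' _ ?_ hpow
  filter_upwards [hbound, Ioo_mem_nhdsGT hz] with x hx ⟨hx0, hxz⟩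
  have hFx : F z / (C * z ^ q) * x ^ q ≤ F x := by
    rw [div_mul_eq_mul_div, div_le_iff₀ (by positivity)]
    calc F z * x ^ q ≤ C * (z / x) ^ q * F x * x ^ q := by
          gcongr
          exact hx z hxz.le
      _ = F x * (C * z ^ q) := by
          rw [Real.div_rpow hz.le hx0.le]
          field_simp
  calc F z / (C * z ^ q) * x⁻¹ ^ (1 - q) = F z / (C * z ^ q) * x ^ q / x := by
        rw [Real.inv_rpow hx0.le, Real.rpow_sub hx0, Real.rpow_one, inv_div, mul_div_assoc]
    _ ≤ F x / x := by gcongr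

end RegularlyVaryingAtZero

end RegularVariation

/-! ### The logarithmic tail and the moments on `(0, 1]` -/

section LogTail

variable {ν : Measure ℝ} [IsFiniteMeasure ν]

/-- The tail of `ν` at the point `1` in the logarithmic variable `λ = e⁻ˣ`, that is, the mass of
`(e⁻ˣ, 1]`. -/
noncomputable def logTail (ν : Measure ℝ) (x : ℝ) : ℝ := ν.real (Ioc (Real.exp (-x)) 1)

/-- The part in `(0, 1]` of the `k`-th moment of `ν`. -/
noncomputable def unitMoment (ν : Measure ℝ) (k : ℕ) : ℝ := ∫ l in Ioc 0 1, l ^ k ∂ν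

lemma logTail_nonneg (ν : Measure ℝ) (x : ℝ) : 0 ≤ logTail ν x := measureReal_nonneg

lemma logTail_le_measureReal_univ (x : ℝ) : logTail ν x ≤ ν.real univ :=
  measureReal_mono (subset_univ _)

lemma logTail_mono : Monotone (logTail ν) := fun x y hxy =>
  measureReal_mono (Ioc_subset_Ioc_left (Real.exp_le_exp.2 (neg_le_neg hxy)))

lemma integrableOn_pow_Ioc (k : ℕ) : IntegrableOn (fun l => l ^ k) (Ioc 0 1) ν :=
  (continuous_pow k).locallyIntegrable.integrableOn_isCompact isCompact_Icc |>.mono_set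
    Ioc_subset_Icc_self

lemma unitMoment_nonneg (ν : Measure ℝ) (k : ℕ) : 0 ≤ unitMoment ν k :=
  setIntegral_nonneg measurableSet_Ioc fun _ hl => pow_nonneg hl.1.le k

lemma integral_Ioo_zero_one_eq_integral_exp_neg_mul (g : ℝ → ℝ) {a : ℝ} (ha : 0 < a) :
    ∫ t in Ioo 0 1, g t = ∫ y in Ioi 0, a * Real.exp (-(a * y)) * g (Real.exp (-(a * y))) := by
  have himage : (fun y => Real.exp (-(a * y))) '' Ioi 0 = Ioo 0 1 := by
    ext t
    refine ⟨?_, fun ht => ⟨-Real.log t / a, div_pos (neg_pos.2 (Real.log_neg ht.1 ht.2)) ha, ?_⟩⟩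
    · rintro ⟨y, hy, rfl⟩
      exact ⟨Real.exp_pos _, Real.exp_lt_one_iff.2 (neg_lt_zero.2 (mul_pos ha hy))⟩
    · simp only [mul_div_cancel₀ _ ha.ne', neg_neg, Real.exp_log ht.1]
  have hderiv (y : ℝ) :
      HasDerivAt (fun y => Real.exp (-(a * y))) (Real.exp (-(a * y)) * -(a * 1)) y :=
    ((hasDerivAt_id y).const_mul a).fun_neg.exp
  rw [← himage, integral_image_eq_integral_abs_deriv_smul measurableSet_Ioi
    (fun y _ => (hderiv y).hasDerivWithinAt) (fun y _ z _ h => by simpa [ha.ne'] using h)]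
  simp only [mul_one, abs_mul, abs_neg, Real.abs_exp, abs_of_pos ha, smul_eq_mul,
    mul_comm (Real.exp _) a]

-- Layer cake formula, followed by the substitution `t = exp (-k x y)`.
lemma unitMoment_eq_integral_logTail {k : ℕ} (hk : k ≠ 0) {x : ℝ} (hx : 0 < x) :
    unitMoment ν k = ∫ y in Ioi 0, k * x * Real.exp (-(k * x * y)) * logTail ν (y * x) := by
  have hlevel (t : ℝ) : (ν.restrict (Ioc 0 1)).real {l | t < l ^ k} =
      ν.real ({l | t < l ^ k} ∩ Ioc 0 1) :=
    measureReal_restrict_apply (measurableSet_lt measurable_const (by fun_prop))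
  have hempty (t : ℝ) (ht : 1 ≤ t) : {l : ℝ | t < l ^ k} ∩ Ioc 0 1 = ∅ :=
    eq_empty_of_forall_notMem fun l ⟨hl, h0, h1⟩ => (pow_le_one₀ h0.le h1).not_gt (ht.trans_lt hl)
  have hset (y : ℝ) : {l : ℝ | Real.exp (-(k * x * y)) < l ^ k} ∩ Ioc 0 1 =
      Ioc (Real.exp (-(y * x))) 1 := by
    ext l
    rw [show -(k * x * y) = k * -(y * x) by ring, Real.exp_nat_mul]
    exact ⟨fun ⟨h, h0, h1⟩ => ⟨lt_of_pow_lt_pow_left₀ k h0.le h, h1⟩, fun ⟨h, h1⟩ =>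
      ⟨pow_lt_pow_left₀ h (Real.exp_pos _).le hk, (Real.exp_pos _).trans h, h1⟩⟩
  calc unitMoment ν k = ∫ t in Ioi 0, (ν.restrict (Ioc 0 1)).real {l | t < l ^ k} :=
        (integrableOn_pow_Ioc k).integral_eq_integral_meas_lt <|
          (ae_restrict_iff' measurableSet_Ioc).2 (.of_forall fun l hl => pow_nonneg hl.1.le k)
    _ = ∫ t in Ioo 0 1, (ν.restrict (Ioc 0 1)).real {l | t < l ^ k} :=
        setIntegral_eq_of_subset_of_forall_sdiff_eq_zero measurableSet_Ioi Ioo_subset_Ioi_self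
          fun t ht => by
            rw [hlevel, hempty t (not_lt.1 fun h => ht.2 ⟨ht.1, h⟩), measureReal_empty]
    _ = _ := by
        rw [integral_Ioo_zero_one_eq_integral_exp_neg_mul _ (by positivity : 0 < k * x)]
        simp only [hlevel, hset, logTail]

end LogTail

section ExponentialMoments

lemma integrableOn_mul_exp_neg_mul_rpow {r p : ℝ} (hr : 0 < r) (hp : -1 < p) :
    IntegrableOn (fun y => r * Real.exp (-(r * y)) * y ^ p) (Ioi 0) := by
  have hint : IntegrableOn (fun y => r * (y ^ p * Real.exp (-r * y ^ (1 : ℝ)))) (Ioi 0) :=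
    (integrableOn_rpow_mul_exp_neg_mul_rpow hp one_pos hr).const_mul r
  refine hint.congr_fun (fun y _ => ?_) measurableSet_Ioi
  simp only [Real.rpow_one, neg_mul]
  ring

lemma integral_mul_exp_neg_mul_rpow {r p : ℝ} (hr : 0 < r) (hp : -1 < p) :
    ∫ y in Ioi 0, r * Real.exp (-(r * y)) * y ^ p = Real.Gamma (p + 1) * r ^ (-p) := by
  have hint := Real.integral_rpow_mul_exp_neg_mul_Ioi (a := p + 1) (by linarith) hr
  rw [add_sub_cancel_right] at hint
  calc ∫ y in Ioi 0, r * Real.exp (-(r * y)) * y ^ p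
      = r * ∫ y in Ioi 0, y ^ p * Real.exp (-(r * y)) := by
        rw [← integral_const_mul]
        exact integral_congr_ae (.of_forall fun y => by ring)
    _ = Real.Gamma (p + 1) * r ^ (-p) := by
        rw [hint, one_div, Real.inv_rpow hr.le, ← Real.rpow_neg hr.le, neg_add, ← sub_eq_add_neg,
          Real.rpow_sub_one hr.ne']
        field_simp

lemma integrableOn_mul_exp_neg_mul_one_add_rpow {r q : ℝ} (hr : 0 < r) (hq : 0 < q) :
    IntegrableOn (fun y => r * Real.exp (-(r * y)) * (1 + y ^ q)) (Ioi 0) := by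
  have h := (integrableOn_mul_exp_neg_mul_rpow hr (p := 0) (by norm_num)).add
    (integrableOn_mul_exp_neg_mul_rpow hr (p := q) (by linarith))
  refine h.congr_fun (fun y _ => ?_) measurableSet_Ioi
  simp only [Pi.add_apply, Real.rpow_zero]
  ring

lemma integral_mul_exp_neg_mul_one_add_rpow {r q : ℝ} (hr : 0 < r) (hq : 0 < q) :
    ∫ y in Ioi 0, r * Real.exp (-(r * y)) * (1 + y ^ q) = 1 + Real.Gamma (q + 1) * r ^ (-q) := by
  have h0 := integral_mul_exp_neg_mul_rpow hr (p := 0) (by norm_num)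
  simp only [Real.rpow_zero, mul_one, zero_add, Real.Gamma_one, neg_zero] at h0
  have hint0 := integrableOn_mul_exp_neg_mul_rpow hr (p := 0) (by norm_num)
  simp only [Real.rpow_zero, mul_one] at hint0
  simp only [mul_add, mul_one]
  rw [integral_add hint0 (integrableOn_mul_exp_neg_mul_rpow hr (by linarith)), h0,
    integral_mul_exp_neg_mul_rpow hr (by linarith)]

end ExponentialMoments

section MomentAsymptotics

variable {ν : Measure ℝ} [IsFiniteMeasure ν]

lemma unitMoment_le_of_logTail_le {x q C : ℝ} (hx : 0 < x) (hq : 0 < q) (hC : 0 < C)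
    (hbound : ∀ y > 0, logTail ν (y * x) ≤ C * (1 + y ^ q) * logTail ν x)
    {k : ℕ} (hk : k ≠ 0) (hkx : k * x ≤ 1) :
    unitMoment ν k ≤ C * (1 + Real.Gamma (q + 1)) * (k * x) ^ (-q) * logTail ν x := by
  have hr : 0 < k * x := by positivity
  have hF := logTail_nonneg ν x
  have hone : 1 ≤ (k * x) ^ (-q) := Real.one_le_rpow_of_pos_of_le_one_of_nonpos hr hkx (by linarith)
  have hint := integrableOn_mul_exp_neg_mul_one_add_rpow hr hq
  calc unitMoment ν k
      = ∫ y in Ioi 0, k * x * Real.exp (-(k * x * y)) * logTail ν (y * x) :=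
        unitMoment_eq_integral_logTail hk hx
    _ ≤ ∫ y in Ioi 0, C * logTail ν x * (k * x * Real.exp (-(k * x * y)) * (1 + y ^ q)) := by
        refine integral_mono_of_nonneg (.of_forall fun y => ?_) (hint.const_mul _) ?_
        · have := logTail_nonneg ν (y * x)
          positivity
        · filter_upwards [ae_restrict_mem measurableSet_Ioi] with y hy
          calc k * x * Real.exp (-(k * x * y)) * logTail ν (y * x)
              ≤ k * x * Real.exp (-(k * x * y)) * (C * (1 + y ^ q) * logTail ν x) := by
                gcongr
                exact hbound y hy
            _ = _ := by ring
    _ = C * logTail ν x * (1 + Real.Gamma (q + 1) * (k * x) ^ (-q)) := by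
        rw [integral_const_mul, integral_mul_exp_neg_mul_one_add_rpow hr hq]
    _ ≤ C * logTail ν x * ((k * x) ^ (-q) + Real.Gamma (q + 1) * (k * x) ^ (-q)) := by gcongr
    _ = _ := by ring

lemma RegularlyVaryingAtZero.tendsto_unitMoment_div {β : ℝ} (hβ : -1 < β)
    (hF : RegularlyVaryingAtZero (logTail ν) β) {ι : Type*} {l : Filter ι}
    [l.IsCountablyGenerated] {k : ι → ℕ} {x : ι → ℝ} (hx : Tendsto x l (𝓝[>] 0)) {r : ℝ}
    (hr : 0 < r) (hkx : Tendsto (fun i => k i * x i) l (𝓝 r)) :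
    Tendsto (fun i => unitMoment ν (k i) / logTail ν (x i)) l
      (𝓝 (Real.Gamma (β + 1) * r ^ (-β))) := by
  obtain ⟨q, hq, hβq⟩ : ∃ q, 0 < q ∧ β < q := ⟨max β 0 + 1, by positivity, by
    linarith [le_max_left β 0]⟩
  obtain ⟨C, -, hbound⟩ :=
    hF.exists_forall_mul_le logTail_mono (logTail_nonneg ν) logTail_le_measureReal_univ hq hβq
  rw [← integral_mul_exp_neg_mul_rpow hr hβ]
  have hxpos : ∀ᶠ i in l, 0 < x i := hx.eventually self_mem_nhdsWithin
  have hintegral : ∀ᶠ i in l, ∫ y in Ioi 0, k i * x i * Real.exp (-(k i * x i * y)) *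
      (logTail ν (y * x i) / logTail ν (x i)) = unitMoment ν (k i) / logTail ν (x i) := by
    filter_upwards [hxpos, hkx.eventually_const_lt hr] with i hxi hkxi
    have hk : k i ≠ 0 := fun h => by simp [h] at hkxi
    rw [unitMoment_eq_integral_logTail hk hxi, ← integral_div]
    simp only [mul_div_assoc]
  refine (tendsto_integral_filter_of_dominated_convergence
    (fun y => 4 * C * (r / 2 * Real.exp (-(r / 2 * y)) * (1 + y ^ q))) ?_ ?_
    ((integrableOn_mul_exp_neg_mul_one_add_rpow (half_pos hr) hq).const_mul _) ?_).congr' hintegral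
  · refine .of_forall fun i => Measurable.aestronglyMeasurable ?_
    have : Measurable fun y => logTail ν (y * x i) :=
      logTail_mono.measurable.comp (measurable_mul_const _)
    fun_prop
  · filter_upwards [hx.eventually hbound, hx.eventually (hF.eventually_pos (logTail_nonneg ν)),
      hkx.eventually_const_le (half_lt_self hr), hkx.eventually_le_const (lt_two_mul_self hr)]
      with i hi hpos hlow hup
    filter_upwards [ae_restrict_mem measurableSet_Ioi] with y (hy : 0 < y)
    have hnn := logTail_nonneg ν (y * x i)
    have hki : 0 ≤ k i * x i := (half_pos hr).le.trans hlow
    rw [Real.norm_of_nonneg (by positivity)]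
    calc k i * x i * Real.exp (-(k i * x i * y)) * (logTail ν (y * x i) / logTail ν (x i))
        ≤ 2 * r * Real.exp (-(r / 2 * y)) * (C * (1 + y ^ q)) := by
          gcongr
          exact (div_le_iff₀ hpos).2 (hi y hy)
      _ = _ := by ring
  · filter_upwards [ae_restrict_mem measurableSet_Ioi] with y (hy : 0 < y)
    exact (hkx.mul (hkx.mul_const y).neg.rexp).mul ((hF y hy).comp hx)

end MomentAsymptotics

/-! ### Riemann sums -/

section RiemannSum

lemma ae_eq_floor_Ioc (f : ℕ → ℝ) (k : ℕ) :
    (fun _ => f k) =ᵐ[volume.restrict (Ioc (k : ℝ) (k + 1 : ℕ))] fun t : ℝ => f ⌊t⌋₊ := by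
  rw [← Measure.restrict_congr_set Ioo_ae_eq_Ioc]
  filter_upwards [ae_restrict_mem measurableSet_Ioo] with t ht
  rw [(Nat.floor_eq_iff (k.cast_nonneg.trans ht.1.le)).2 ⟨ht.1.le, by exact_mod_cast ht.2⟩]

lemma sum_range_eq_intervalIntegral_floor (f : ℕ → ℝ) (n : ℕ) :
    ∑ m ∈ Finset.range n, f m = ∫ t in (0 : ℝ)..n, f ⌊t⌋₊ := by
  have hle (k : ℕ) : (k : ℝ) ≤ (k + 1 : ℕ) := mod_cast k.le_succ
  have hint (k : ℕ) (_ : k < n) :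
      IntervalIntegrable (fun t : ℝ => f ⌊t⌋₊) volume (k : ℝ) (k + 1 : ℕ) :=
    (intervalIntegrable_iff_integrableOn_Ioc_of_le (hle k)).2 <|
      (integrable_const _).congr (ae_eq_floor_Ioc f k)
  have hsum := intervalIntegral.sum_integral_adjacent_intervals hint
  rw [Nat.cast_zero] at hsum
  rw [← hsum]
  refine Finset.sum_congr rfl fun k _ => ?_
  rw [intervalIntegral.integral_of_le (hle k), ← integral_congr_ae (ae_eq_floor_Ioc f k),
    setIntegral_const]
  simp

lemma sum_range_div_eq_integral_floor (f : ℕ → ℝ) {n : ℕ} (hn : n ≠ 0) :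
    (∑ m ∈ Finset.range n, f m) / n = ∫ r in Ioo (0 : ℝ) 1, f ⌊r * n⌋₊ := by
  rw [← integral_Ioc_eq_integral_Ioo, ← intervalIntegral.integral_of_le zero_le_one,
    intervalIntegral.integral_comp_mul_right (fun t : ℝ => f ⌊t⌋₊) (Nat.cast_ne_zero.2 hn),
    zero_mul, one_mul, ← sum_range_eq_intervalIntegral_floor, smul_eq_mul, div_eq_inv_mul]

lemma tendsto_sum_range_div_of_dominated {f : ℕ → ℕ → ℝ} {g bound : ℝ → ℝ}
    (hbound : IntegrableOn bound (Ioo 0 1))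
    (hle : ∀ᶠ n : ℕ in atTop, ∀ r ∈ Ioo (0 : ℝ) 1, |f n ⌊r * n⌋₊| ≤ bound r)
    (hlim : ∀ r ∈ Ioo (0 : ℝ) 1, Tendsto (fun n : ℕ => f n ⌊r * n⌋₊) atTop (𝓝 (g r))) :
    Tendsto (fun n : ℕ => (∑ m ∈ Finset.range n, f n m) / n) atTop
      (𝓝 (∫ r in Ioo 0 1, g r)) := by
  refine (tendsto_integral_filter_of_dominated_convergence bound ?_ ?_ hbound ?_).congr' <| by
    filter_upwards [eventually_ne_atTop 0] with n hn
    exact (sum_range_div_eq_integral_floor (f n) hn).symm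
  · exact .of_forall fun n => ((measurable_of_countable (f n)).comp
      (Nat.measurable_floor.comp (measurable_mul_const _))).aestronglyMeasurable
  · filter_upwards [hle] with n hn
    filter_upwards [ae_restrict_mem measurableSet_Ioo] with r hr
    exact hn r hr
  · filter_upwards [ae_restrict_mem measurableSet_Ioo] with r hr
    exact hlim r hr

lemma integral_one_sub_mul_rpow_neg {β : ℝ} (hβ : β < 1) :
    ∫ r in Ioo (0 : ℝ) 1, (1 - r) * r ^ (-β) = 1 / ((1 - β) * (2 - β)) := by
  have h₁ : 1 - β ≠ 0 := by linarith
  have h₂ : 2 - β ≠ 0 := by linarith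
  have hsub : ∀ r ∈ Ioo (0 : ℝ) 1, (1 - r) * r ^ (-β) = r ^ (-β) - r ^ (1 - β) := by
    intro r hr
    rw [sub_eq_add_neg 1 β, Real.rpow_one_add' hr.1.le (by rwa [← sub_eq_add_neg])]
    ring
  rw [setIntegral_congr_fun measurableSet_Ioo hsub, ← integral_Ioc_eq_integral_Ioo,
    ← intervalIntegral.integral_of_le zero_le_one, intervalIntegral.integral_sub
      (intervalIntegral.intervalIntegrable_rpow' (by linarith))
      (intervalIntegral.intervalIntegrable_rpow' (by linarith)),
    integral_rpow (Or.inl (by linarith)), integral_rpow (Or.inl (by linarith)),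
    show -β + 1 = 1 - β by ring, show 1 - β + 1 = 2 - β by ring, Real.one_rpow, Real.one_rpow,
    Real.zero_rpow h₁, Real.zero_rpow h₂]
  field_simp
  ring

end RiemannSum

/-! ### The variance kernel -/

section VarianceKernel

/-- The integrand of `VarSeqR`, which equals `∑_{i,j<n} l ^ |i - j|`. -/
def varKernel (n : ℕ) (l : ℝ) : ℝ := n + 2 * ∑ k ∈ Finset.Ico 1 n, ((n : ℝ) - k) * l ^ k

lemma continuous_varKernel (n : ℕ) : Continuous (varKernel n) := by
  unfold varKernel
  fun_prop

lemma varKernel_eq_add_sum_range (n : ℕ) (l : ℝ) :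
    varKernel n l = n + 2 * ∑ m ∈ Finset.range n, (n - (m + 1 : ℕ)) * l ^ (m + 1) := by
  rcases n with _ | n
  · simp [varKernel]
  · rw [varKernel, Finset.sum_range_succ, Finset.sum_Ico_eq_sum_range]
    simp [add_comm 1]

lemma varKernel_succ (n : ℕ) (l : ℝ) :
    varKernel (n + 1) l = varKernel n l + 1 + 2 * l * ∑ i ∈ Finset.range n, l ^ i := by
  have hsplit : ∑ m ∈ Finset.range n, (((n + 1 : ℕ) : ℝ) - (m + 1 : ℕ)) * l ^ (m + 1) =
      ∑ m ∈ Finset.range n, ((n : ℝ) - (m + 1 : ℕ)) * l ^ (m + 1) +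
        l * ∑ m ∈ Finset.range n, l ^ m := by
    rw [Finset.mul_sum, ← Finset.sum_add_distrib]
    refine Finset.sum_congr rfl fun m _ => ?_
    push_cast
    ring
  rw [varKernel_eq_add_sum_range, varKernel_eq_add_sum_range, Finset.sum_range_succ, hsplit]
  push_cast
  ring

lemma varKernel_one_right (n : ℕ) : varKernel n 1 = n ^ 2 := by
  induction n with
  | zero => simp [varKernel]
  | succ n ih =>
    rw [varKernel_succ, ih]
    simp only [one_pow, Finset.sum_const, Finset.card_range, nsmul_eq_mul]
    push_cast
    ring

lemma one_sub_sq_mul_varKernel (n : ℕ) (l : ℝ) :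
    (1 - l) ^ 2 * varKernel n l = n * (1 - l ^ 2) - 2 * l * (1 - l ^ n) := by
  induction n with
  | zero => simp [varKernel]
  | succ n ih =>
    rw [varKernel_succ]
    push_cast
    linear_combination ih - 2 * l * (1 - l) * geom_sum_mul l n

/-- The positive terms on the right are what makes the method of moments applicable. -/
lemma varKernel_second_diff (n k : ℕ) (l : ℝ) :
    varKernel ((k + 2) * n) l - 2 * varKernel ((k + 1) * n) l + varKernel (k * n) l =
      2 * l ^ (k * n + 1) * (∑ i ∈ Finset.range n, l ^ i) ^ 2 := by
  rcases eq_or_ne l 1 with rfl | hl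
  · simp only [varKernel_one_right, one_pow, Finset.sum_const, Finset.card_range, nsmul_eq_mul]
    push_cast
    ring
  refine mul_left_cancel₀ (pow_ne_zero 2 (sub_ne_zero.2 hl.symm)) ?_
  have h₂ := one_sub_sq_mul_varKernel ((k + 2) * n) l
  have h₁ := one_sub_sq_mul_varKernel ((k + 1) * n) l
  have h₀ := one_sub_sq_mul_varKernel (k * n) l
  have hgeom := geom_sum_mul l n
  push_cast at h₂ h₁ h₀
  linear_combination h₂ - 2 * h₁ + h₀ - 2 * l ^ (k * n + 1) *
    ((∑ i ∈ Finset.range n, l ^ i) * (l - 1) + (l ^ n - 1)) * hgeom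

lemma abs_varKernel_le {l : ℝ} (hl : l ∈ Icc (-1) 0) (n : ℕ) : |varKernel n l| ≤ 5 * n := by
  rcases n.eq_zero_or_pos with rfl | hn
  · simp [varKernel]
  have hn1 : (1 : ℝ) ≤ n := mod_cast hn
  have hsq : 1 ≤ (1 - l) ^ 2 := one_le_pow₀ (by linarith [hl.2])
  have hpow : |1 - l ^ n| ≤ 2 := by
    have : |l ^ n| ≤ 1 := by
      rw [abs_pow]
      exact pow_le_one₀ (abs_nonneg l) (abs_le.2 ⟨hl.1, hl.2.trans zero_le_one⟩)
    calc |1 - l ^ n| ≤ |1| + |l ^ n| := abs_sub _ _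
      _ ≤ 2 := by rw [abs_one]; linarith
  have hl1 : |l| ≤ 1 := abs_le.2 ⟨hl.1, hl.2.trans zero_le_one⟩
  have hl2 : |1 - l ^ 2| ≤ 1 := abs_le.2 ⟨by nlinarith [hl.1, hl.2], by nlinarith [sq_nonneg l]⟩
  calc |varKernel n l| ≤ (1 - l) ^ 2 * |varKernel n l| := le_mul_of_one_le_left (abs_nonneg _) hsq
    _ = |n * (1 - l ^ 2) - 2 * l * (1 - l ^ n)| := by
      rw [← one_sub_sq_mul_varKernel, abs_mul, abs_of_nonneg (sq_nonneg (1 - l))]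
    _ ≤ n * |1 - l ^ 2| + 2 * |l| * |1 - l ^ n| := by
      refine (abs_sub _ _).trans_eq ?_
      rw [abs_mul, abs_mul, abs_mul, Nat.abs_cast, abs_two]
    _ ≤ n * 1 + 2 * 1 * 2 := by gcongr
    _ ≤ 5 * n := by linarith

end VarianceKernel

/-! ### From the tail to the variance -/

section Abelian

variable {ν : Measure ℝ} [IsFiniteMeasure ν]

lemma integrable_of_continuous_of_measure_compl_Icc_eq_zero {f : ℝ → ℝ} (hf : Continuous f)
    {a b : ℝ} (hν : ν (Icc a b)ᶜ = 0) : Integrable f ν := by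
  rw [← Measure.restrict_eq_self_of_ae_mem (ae_iff.2 hν)]
  exact hf.continuousOn.integrableOn_compact isCompact_Icc

lemma abs_integral_sub_setIntegral_Ioc_le (hν : ν (Icc (-1) 1)ᶜ = 0) {f : ℝ → ℝ}
    (hf : Continuous f) {C : ℝ} (hC : ∀ l ∈ Icc (-1) 0, |f l| ≤ C) :
    |∫ l, f l ∂ν - ∫ l in Ioc 0 1, f l ∂ν| ≤ C * ν.real univ := by
  have hint := integrable_of_continuous_of_measure_compl_Icc_eq_zero hf hν
  have hC0 : 0 ≤ C := (abs_nonneg _).trans (hC 0 ⟨by norm_num, le_rfl⟩)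
  rw [← setIntegral_compl measurableSet_Ioc hint, ← Real.norm_eq_abs]
  calc ‖∫ l in (Ioc 0 1)ᶜ, f l ∂ν‖ ≤ C * ν.real (Ioc 0 1)ᶜ := by
        refine norm_setIntegral_le_of_norm_le_const_ae (measure_lt_top _ _) ?_
        filter_upwards [ae_restrict_mem measurableSet_Ioc.compl, ae_restrict_of_ae (ae_iff.2 hν)]
          with l hl hl1
        exact hC l ⟨hl1.1, not_lt.1 fun h => hl ⟨h, hl1.2⟩⟩
    _ ≤ C * ν.real univ := mul_le_mul_of_nonneg_left (measureReal_mono (subset_univ _)) hC0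

lemma abs_varSeqR_sub_sum_unitMoment_le (hν : ν (Icc (-1) 1)ᶜ = 0) (n : ℕ) :
    |VarSeqR ν n - 2 * ∑ m ∈ Finset.range n, (n - (m + 1 : ℕ)) * unitMoment ν (m + 1)| ≤
      6 * ν.real univ * n := by
  have hpos : ∫ l in Ioc 0 1, varKernel n l ∂ν = n * ν.real (Ioc 0 1) +
      2 * ∑ m ∈ Finset.range n, (n - (m + 1 : ℕ)) * unitMoment ν (m + 1) := by
    have hint (m : ℕ) : IntegrableOn (fun l => ((n : ℝ) - (m + 1 : ℕ)) * l ^ (m + 1)) (Ioc 0 1) ν :=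
      (integrableOn_pow_Ioc (m + 1)).const_mul _
    simp only [varKernel_eq_add_sum_range]
    rw [integral_add (integrable_const _) ((integrable_finsetSum _ fun m _ => hint m).const_mul 2),
      integral_const_mul, integral_finsetSum _ fun m _ => hint m, setIntegral_const, smul_eq_mul,
      mul_comm (n : ℝ)]
    simp only [integral_const_mul, unitMoment]
  have hneg := abs_integral_sub_setIntegral_Ioc_le hν (continuous_varKernel n)
    fun l hl => abs_varKernel_le hl n
  have hmass : ν.real (Ioc 0 1) ≤ ν.real univ := measureReal_mono (subset_univ _)
  have hVar : VarSeqR ν n = ∫ l, varKernel n l ∂ν := rfl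
  calc |VarSeqR ν n - 2 * ∑ m ∈ Finset.range n, (n - (m + 1 : ℕ)) * unitMoment ν (m + 1)|
      = |(∫ l, varKernel n l ∂ν - ∫ l in Ioc 0 1, varKernel n l ∂ν) + n * ν.real (Ioc 0 1)| := by
        rw [hVar, hpos]
        congr 1
        ring
    _ ≤ 5 * n * ν.real univ + n * ν.real univ := by
        refine (abs_add_le _ _).trans (add_le_add hneg ?_)
        rw [abs_of_nonneg (by positivity)]
        gcongr
    _ = 6 * ν.real univ * n := by ring

lemma tendsto_one_div_natCast_nhdsGT_zero : Tendsto (fun n : ℕ => 1 / (n : ℝ)) atTop (𝓝[>] 0) := by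
  simp only [one_div]
  exact tendsto_inv_atTop_nhdsGT_zero.comp tendsto_natCast_atTop_atTop

lemma tendsto_floor_mul_add_one_mul_one_div {r : ℝ} (hr : 0 ≤ r) :
    Tendsto (fun n : ℕ => (⌊r * n⌋₊ + 1 : ℕ) * (1 / (n : ℝ))) atTop (𝓝 r) := by
  have hfloor := (tendsto_nat_floor_mul_div_atTop hr).comp (tendsto_natCast_atTop_atTop (R := ℝ))
  have hadd := hfloor.add (tendsto_one_div_atTop_nhds_zero_nat (𝕜 := ℝ))
  rw [add_zero] at hadd
  refine hadd.congr fun n => ?_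
  push_cast
  rw [Function.comp_apply, add_mul, mul_one_div, one_mul]

lemma floor_mul_add_one_mul_one_div_mem_Icc {r : ℝ} (hr : r ∈ Ioo 0 1) {n : ℕ} (hn : 0 < n) :
    (⌊r * n⌋₊ + 1 : ℕ) * (1 / (n : ℝ)) ∈ Icc r 1 := by
  have hn' : (0 : ℝ) < n := mod_cast hn
  rw [mul_one_div, mem_Icc, le_div_iff₀ hn', div_le_one hn']
  exact ⟨mod_cast (Nat.lt_floor_add_one (r * n)).le,
    mod_cast (Nat.floor_lt (mul_pos hr.1 hn').le).2 (mul_lt_of_lt_one_left hn' hr.2)⟩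

variable {β : ℝ}

lemma RegularlyVaryingAtZero.exists_unitMoment_div_logTail_le
    (hF : RegularlyVaryingAtZero (logTail ν) β) {q : ℝ} (hq : 0 < q) (hβq : β < q) :
    ∃ K > 0, ∀ᶠ x : ℝ in 𝓝[>] 0, ∀ k : ℕ, k ≠ 0 → k * x ≤ 1 →
      unitMoment ν k / logTail ν x ≤ K * (k * x) ^ (-q) := by
  obtain ⟨C, hC, hbound⟩ :=
    hF.exists_forall_mul_le logTail_mono (logTail_nonneg ν) logTail_le_measureReal_univ hq hβq
  refine ⟨C * (1 + Real.Gamma (q + 1)), by positivity, ?_⟩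
  filter_upwards [hbound, hF.eventually_pos (logTail_nonneg ν), self_mem_nhdsWithin]
    with x hx hFx hx0 k hk hkx
  exact (div_le_iff₀ hFx).2 (unitMoment_le_of_logTail_le hx0 hq hC hx hk hkx)

lemma RegularlyVaryingAtZero.tendsto_sum_unitMoment_div (hβ : β ∈ Ioo (-1) 1)
    (hF : RegularlyVaryingAtZero (logTail ν) β) :
    Tendsto (fun n : ℕ => (∑ m ∈ Finset.range n, (n - (m + 1 : ℕ)) * unitMoment ν (m + 1)) /
      (n ^ 2 * logTail ν (1 / n))) atTop (𝓝 (Real.Gamma (β + 1) / ((1 - β) * (2 - β)))) := by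
  obtain ⟨q, hq, hq1⟩ := exists_between (max_lt hβ.2 one_pos)
  obtain ⟨hβq, hq0⟩ := max_lt_iff.1 hq
  obtain ⟨K, hK, hbound⟩ := hF.exists_unitMoment_div_logTail_le hq0 hβq
  have hx := tendsto_one_div_natCast_nhdsGT_zero
  let f (n m : ℕ) : ℝ := (1 - (m + 1 : ℕ) * (1 / n)) * (unitMoment ν (m + 1) / logTail ν (1 / n))
  have hle : ∀ᶠ n : ℕ in atTop, ∀ r ∈ Ioo (0 : ℝ) 1, |f n ⌊r * n⌋₊| ≤ K * r ^ (-q) := by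
    filter_upwards [hx.eventually hbound, eventually_gt_atTop 0] with n hn hn0 r hr
    obtain ⟨hlow, hup⟩ := floor_mul_add_one_mul_one_div_mem_Icc hr hn0
    have hnonneg : 0 ≤ unitMoment ν (⌊r * n⌋₊ + 1) / logTail ν (1 / n) :=
      div_nonneg (unitMoment_nonneg ν _) (logTail_nonneg ν _)
    rw [abs_of_nonneg (mul_nonneg (by linarith) hnonneg)]
    calc f n ⌊r * n⌋₊ ≤ 1 * (K * ((⌊r * n⌋₊ + 1 : ℕ) * (1 / (n : ℝ))) ^ (-q)) :=
          mul_le_mul (by linarith [hr.1]) (hn _ (Nat.succ_ne_zero _) hup) hnonneg zero_le_one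
      _ ≤ K * r ^ (-q) := by
          rw [one_mul]
          have := Real.rpow_le_rpow_of_nonpos hr.1 hlow (neg_nonpos.2 hq0.le)
          gcongr
  have hlim (r : ℝ) (hr : r ∈ Ioo (0 : ℝ) 1) : Tendsto (fun n : ℕ => f n ⌊r * n⌋₊) atTop
      (𝓝 (Real.Gamma (β + 1) * ((1 - r) * r ^ (-β)))) := by
    have hk := tendsto_floor_mul_add_one_mul_one_div hr.1.le
    rw [mul_left_comm]
    exact (hk.const_sub 1).mul (hF.tendsto_unitMoment_div hβ.1 hx hr.1 hk)
  have hsum := tendsto_sum_range_div_of_dominated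
    (((intervalIntegral.integrableOn_Ioo_rpow_iff one_pos).2 (by linarith)).const_mul K) hle hlim
  rw [integral_const_mul, integral_one_sub_mul_rpow_neg hβ.2, mul_one_div] at hsum
  refine hsum.congr' ?_
  filter_upwards [eventually_ne_atTop 0] with n hn
  rw [Finset.sum_div, Finset.sum_div]
  refine Finset.sum_congr rfl fun m _ => ?_
  simp only [f]
  field_simp

/-- The limit of the variance `VarSeqR ν n` relative to `n ^ 2 * logTail ν (1 / n)` when `logTail ν`
is regularly varying with index `β`. -/
noncomputable def varTailConst (β : ℝ) : ℝ := 2 * Real.Gamma (β + 1) / ((1 - β) * (2 - β))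

lemma varTailConst_pos (hβ : β ∈ Ioo (-1) 1) : 0 < varTailConst β := by
  have hΓ : 0 < Real.Gamma (β + 1) := Real.Gamma_pos_of_pos (by linarith [hβ.1])
  have h1 : 0 < 1 - β := sub_pos.2 hβ.2
  have h2 : 0 < 2 - β := by linarith
  rw [varTailConst]
  positivity

lemma RegularlyVaryingAtZero.tendsto_varSeqR_div (hν : ν (Icc (-1) 1)ᶜ = 0)
    (hβ : β ∈ Ioo (-1) 1) (hF : RegularlyVaryingAtZero (logTail ν) β) :
    Tendsto (fun n : ℕ => VarSeqR ν n / (n ^ 2 * logTail ν (1 / n))) atTop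
      (𝓝 (varTailConst β)) := by
  have hx := tendsto_one_div_natCast_nhdsGT_zero
  have hinf := (hF.tendsto_div_atTop logTail_mono (logTail_nonneg ν) logTail_le_measureReal_univ
    hβ.2).comp hx
  have herror : Tendsto (fun n : ℕ => (VarSeqR ν n -
      2 * ∑ m ∈ Finset.range n, (n - (m + 1 : ℕ)) * unitMoment ν (m + 1)) /
        (n ^ 2 * logTail ν (1 / n))) atTop (𝓝 0) := by
    refine squeeze_zero_norm' ?_ (hinf.const_div_atTop (6 * ν.real univ))
    filter_upwards [eventually_gt_atTop 0] with n hn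
    have hFn := logTail_nonneg ν (1 / n)
    rw [norm_div, Real.norm_eq_abs, Real.norm_of_nonneg (by positivity)]
    calc _ ≤ 6 * ν.real univ * n / (n ^ 2 * logTail ν (1 / n)) := by
          gcongr
          exact abs_varSeqR_sub_sum_unitMoment_le hν n
      _ = 6 * ν.real univ / (logTail ν (1 / n) / (1 / n)) := by field_simp
  have hadd := herror.add ((hF.tendsto_sum_unitMoment_div hβ).const_mul 2)
  rw [zero_add, ← mul_div_assoc, ← varTailConst] at hadd
  exact hadd.congr fun n => by ring

lemma SlowlyVaryingAtTop.tendsto_varSeqR_div_regVarModel (hν : ν (Icc (-1) 1)ᶜ = 0) {h : ℝ → ℝ}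
    (hh : SlowlyVaryingAtTop h) (hβ : β ∈ Ioo (-1) 1) {d : ℝ} (hd : d ≠ 0)
    (hF : Tendsto (fun x => logTail ν x / regVarModel h β x) (𝓝[>] 0) (𝓝 d)) :
    Tendsto (fun n : ℕ => VarSeqR ν n / (n ^ 2 * regVarModel h β (1 / n))) atTop
      (𝓝 (varTailConst β * d)) := by
  have hreg := hh.regularlyVaryingAtZero_of_tendsto_div hd hF
  have hx := tendsto_one_div_natCast_nhdsGT_zero
  refine ((hreg.tendsto_varSeqR_div hν hβ).mul (hF.comp hx)).congr' ?_
  filter_upwards [hx.eventually (hreg.eventually_pos (logTail_nonneg ν))] with n hn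
  rw [Function.comp_apply]
  field_simp

lemma RegularlyVaryingAtZero.tendsto_logTail_div_varSeqR (hν : ν (Icc (-1) 1)ᶜ = 0)
    (hβ : β ∈ Ioo (-1) 1) (hF : RegularlyVaryingAtZero (logTail ν) β) {y : ℝ} (hy : 0 < y) :
    Tendsto (fun n : ℕ => n ^ 2 * logTail ν (y / n) / VarSeqR ν n) atTop
      (𝓝 (y ^ β / varTailConst β)) := by
  have hx := tendsto_one_div_natCast_nhdsGT_zero
  refine (((hF y hy).comp hx).div (hF.tendsto_varSeqR_div hν hβ)
    (varTailConst_pos hβ).ne').congr' ?_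
  filter_upwards [hx.eventually (hF.eventually_pos (logTail_nonneg ν))] with n hn
  simp only [Pi.div_apply, Function.comp_apply, mul_one_div]
  field_simp

end Abelian

/-! ### Method of moments -/

section Moments

lemma abs_integral_sub_integral_le {μ : Measure ℝ} [IsFiniteMeasure μ] {a b : ℝ}
    (hμ : μ (Icc a b)ᶜ = 0) {f g : ℝ → ℝ} (hf : Continuous f) (hg : Continuous g) {ε : ℝ}
    (hfg : ∀ w ∈ Icc a b, |f w - g w| ≤ ε) :
    |∫ w, f w ∂μ - ∫ w, g w ∂μ| ≤ ε * μ.real univ := by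
  rw [← integral_sub (integrable_of_continuous_of_measure_compl_Icc_eq_zero hf hμ)
    (integrable_of_continuous_of_measure_compl_Icc_eq_zero hg hμ), ← Real.norm_eq_abs]
  refine norm_integral_le_of_norm_le_const ?_
  filter_upwards [ae_iff.2 hμ] with w hw using hfg w hw

variable {ι : Type*} {l : Filter ι} {μ : ι → Measure ℝ} [∀ i, IsFiniteMeasure (μ i)] {a b : ℝ}
  {c : ι → ℝ} {m : ℕ → ℝ}

lemma tendsto_integral_eval_div (hμ : ∀ i, μ i (Icc a b)ᶜ = 0)
    (hm : ∀ k, Tendsto (fun i => (∫ w, w ^ k ∂μ i) / c i) l (𝓝 (m k))) (p : Polynomial ℝ) :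
    Tendsto (fun i => (∫ w, p.eval w ∂μ i) / c i) l (𝓝 (p.sum fun k a => a * m k)) := by
  have heval (i : ι) : ∫ w, p.eval w ∂μ i = ∑ k ∈ p.support, p.coeff k * ∫ w, w ^ k ∂μ i := by
    simp only [Polynomial.eval_eq_sum, Polynomial.sum_def]
    rw [integral_finsetSum _ fun k _ => (integrable_of_continuous_of_measure_compl_Icc_eq_zero
      (continuous_pow k) (hμ i)).const_mul _]
    simp only [integral_const_mul]
  simp only [heval, Finset.sum_div, Polynomial.sum_def, mul_div_assoc]
  exact tendsto_finsetSum _ fun k _ => (hm k).const_mul _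

lemma eventually_abs_integral_eval_div_sub_le (hμ : ∀ i, μ i (Icc a b)ᶜ = 0)
    (hc : ∀ᶠ i in l, 0 < c i)
    (hm : ∀ k, Tendsto (fun i => (∫ w, w ^ k ∂μ i) / c i) l (𝓝 (m k))) {f : ℝ → ℝ}
    (hf : Continuous f) {p : Polynomial ℝ} {ε : ℝ} (hε : 0 < ε)
    (hp : ∀ w ∈ Icc a b, |p.eval w - f w| < ε) :
    ∀ᶠ i in l, |(∫ w, p.eval w ∂μ i) / c i - (∫ w, f w ∂μ i) / c i| ≤ ε * (m 0 + 1) := by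
  have hmass := hm 0
  simp only [pow_zero, integral_const, smul_eq_mul, mul_one] at hmass
  filter_upwards [hc, hmass.eventually_le_const (lt_add_one (m 0))] with i hci hi
  rw [← sub_div, abs_div, abs_of_pos hci]
  calc _ ≤ ε * (μ i).real univ / c i := by
        gcongr
        exact abs_integral_sub_integral_le (hμ i) p.continuous hf fun w hw => (hp w hw).le
    _ ≤ ε * (m 0 + 1) := by rw [mul_div_assoc]; gcongr

lemma tendsto_integral_div_sub_integral_div (hμ : ∀ i, μ i (Icc a b)ᶜ = 0)
    (hc : ∀ᶠ i in l, 0 < c i)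
    (hm : ∀ k, Tendsto (fun i => (∫ w, w ^ k ∂μ i) / c i) l (𝓝 (m k)))
    {μ' : ι → Measure ℝ} [∀ i, IsFiniteMeasure (μ' i)] (hμ' : ∀ i, μ' i (Icc a b)ᶜ = 0)
    {c' : ι → ℝ} (hc' : ∀ᶠ i in l, 0 < c' i)
    (hm' : ∀ k, Tendsto (fun i => (∫ w, w ^ k ∂μ' i) / c' i) l (𝓝 (m k))) {f : ℝ → ℝ}
    (hf : Continuous f) :
    Tendsto (fun i => (∫ w, f w ∂μ i) / c i - (∫ w, f w ∂μ' i) / c' i) l (𝓝 0) := by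
  rw [Metric.tendsto_nhds]
  intro ε hε
  obtain ⟨p, hp⟩ := exists_polynomial_near_of_continuousOn a b f hf.continuousOn
    (ε / (4 * (|m 0| + 1))) (by positivity)
  have hpoly := (tendsto_integral_eval_div hμ hm p).sub (tendsto_integral_eval_div hμ' hm' p)
  rw [sub_self] at hpoly
  filter_upwards [Metric.tendsto_nhds.1 hpoly (ε / 4) (by positivity),
    eventually_abs_integral_eval_div_sub_le hμ hc hm hf (by positivity) hp,
    eventually_abs_integral_eval_div_sub_le hμ' hc' hm' hf (by positivity) hp] with i hi h h'
  have hη : ε / (4 * (|m 0| + 1)) * (m 0 + 1) ≤ ε / 4 := by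
    calc _ ≤ ε / (4 * (|m 0| + 1)) * (|m 0| + 1) := by
          gcongr
          exact le_abs_self _
      _ = ε / 4 := by field_simp
  rw [Real.dist_eq, sub_zero, abs_lt] at hi ⊢
  rw [abs_le] at h h'
  constructor <;> linarith

end Moments

/-! ### Block measures -/

section BlockMeasure

/-- The finite measure on `[0, 1]` whose `k`-th moment is, up to the contribution of `[-1, 0]`, the
second difference of `VarSeqR ν` along the multiples `k * n`, `(k + 1) * n`, `(k + 2) * n`: the
image under `l ↦ l ^ n` of `2 l (1 + l + ⋯ + l ^ (n - 1))² ν(dl)` on `(0, 1]`. -/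
noncomputable def blockMeasure (ν : Measure ℝ) (n : ℕ) : Measure ℝ :=
  ((ν.restrict (Ioc 0 1)).withDensity
    fun l => ENNReal.ofReal (2 * l * (∑ i ∈ Finset.range n, l ^ i) ^ 2)).map (· ^ n)

variable {ν : Measure ℝ}

lemma integral_blockMeasure (n : ℕ) {f : ℝ → ℝ} (hf : Continuous f) :
    ∫ w, f w ∂blockMeasure ν n =
      ∫ l in Ioc 0 1, 2 * l * (∑ i ∈ Finset.range n, l ^ i) ^ 2 * f (l ^ n) ∂ν := by
  rw [blockMeasure, integral_map (by fun_prop) hf.aestronglyMeasurable,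
    integral_withDensity_eq_integral_toReal_smul (by fun_prop) (by simp)]
  refine setIntegral_congr_fun measurableSet_Ioc fun l hl => ?_
  have := hl.1.le
  rw [ENNReal.toReal_ofReal (by positivity), smul_eq_mul]

lemma blockMeasure_compl_Icc (n : ℕ) : blockMeasure ν n (Icc 0 1)ᶜ = 0 := by
  refine ae_iff.1 ((ae_map_iff (by fun_prop) measurableSet_Icc).2 ?_)
  refine withDensity_absolutelyContinuous _ _ ?_
  filter_upwards [ae_restrict_mem measurableSet_Ioc] with l hl
  exact ⟨pow_nonneg hl.1.le n, pow_le_one₀ hl.1.le hl.2⟩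

variable [IsFiniteMeasure ν]

instance isFiniteMeasure_blockMeasure (n : ℕ) : IsFiniteMeasure (blockMeasure ν n) := by
  have hint : IntegrableOn (fun l => 2 * l * (∑ i ∈ Finset.range n, l ^ i) ^ 2) (Ioc 0 1) ν :=
    (ContinuousOn.integrableOn_compact isCompact_Icc (by fun_prop)).mono_set Ioc_subset_Icc_self
  have := isFiniteMeasure_withDensity_ofReal hint.2
  exact Measure.isFiniteMeasure_map _ _

lemma abs_two_mul_pow_mul_geom_sum_sq_le {l : ℝ} (hl : l ∈ Icc (-1) 0) (n k : ℕ) :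
    |2 * l ^ k * (∑ i ∈ Finset.range n, l ^ i) ^ 2| ≤ 8 := by
  have hpow (j : ℕ) : |l ^ j| ≤ 1 := by
    rw [abs_pow]
    exact pow_le_one₀ (abs_nonneg l) (abs_le.2 ⟨hl.1, hl.2.trans zero_le_one⟩)
  have hgeom : |∑ i ∈ Finset.range n, l ^ i| ≤ 2 := by
    calc |∑ i ∈ Finset.range n, l ^ i| ≤ |∑ i ∈ Finset.range n, l ^ i| * |l - 1| :=
          le_mul_of_one_le_right (abs_nonneg _) (by
            rw [abs_of_neg (by linarith [hl.2])]; linarith [hl.2])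
      _ = |l ^ n - 1| := by rw [← abs_mul, geom_sum_mul]
      _ ≤ |l ^ n| + |1| := abs_sub _ _
      _ ≤ 2 := by rw [abs_one]; linarith [hpow n]
  calc |2 * l ^ k * (∑ i ∈ Finset.range n, l ^ i) ^ 2|
      = 2 * |l ^ k| * |∑ i ∈ Finset.range n, l ^ i| ^ 2 := by
        rw [abs_mul, abs_mul, abs_two, abs_pow (∑ i ∈ Finset.range n, l ^ i)]
    _ ≤ 2 * 1 * 2 ^ 2 := by gcongr; exact hpow k
    _ = 8 := by norm_num

lemma abs_varSeqR_second_diff_sub_le (hν : ν (Icc (-1) 1)ᶜ = 0) (n k : ℕ) :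
    |VarSeqR ν ((k + 2) * n) - 2 * VarSeqR ν ((k + 1) * n) + VarSeqR ν (k * n) -
      ∫ w, w ^ k ∂blockMeasure ν n| ≤ 8 * ν.real univ := by
  have hint (j : ℕ) : Integrable (varKernel j) ν :=
    integrable_of_continuous_of_measure_compl_Icc_eq_zero (continuous_varKernel j) hν
  have hdiff : VarSeqR ν ((k + 2) * n) - 2 * VarSeqR ν ((k + 1) * n) + VarSeqR ν (k * n) =
      ∫ l, 2 * l ^ (k * n + 1) * (∑ i ∈ Finset.range n, l ^ i) ^ 2 ∂ν := by
    have hint₂ :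
        Integrable (fun l => varKernel ((k + 2) * n) l - 2 * varKernel ((k + 1) * n) l) ν :=
      (hint _).sub ((hint _).const_mul 2)
    simp only [← varKernel_second_diff]
    rw [integral_add hint₂ (hint _), integral_sub (hint _) ((hint _).const_mul 2),
      integral_const_mul]
    rfl
  have hmoment : ∫ w, w ^ k ∂blockMeasure ν n =
      ∫ l in Ioc 0 1, 2 * l ^ (k * n + 1) * (∑ i ∈ Finset.range n, l ^ i) ^ 2 ∂ν := by
    rw [integral_blockMeasure n (continuous_pow k)]
    congr 1 with l
    ring
  rw [hdiff, hmoment]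
  exact abs_integral_sub_setIntegral_Ioc_le hν (by fun_prop)
    fun l hl => abs_two_mul_pow_mul_geom_sum_sq_le hl n _

lemma tendsto_moment_blockMeasure_div (hν : ν (Icc (-1) 1)ᶜ = 0)
    (hinf : Tendsto (VarSeqR ν) atTop atTop) {v : ℕ → ℝ}
    (hv : ∀ k, Tendsto (fun n => VarSeqR ν (k * n) / VarSeqR ν n) atTop (𝓝 (v k))) (k : ℕ) :
    Tendsto (fun n => (∫ w, w ^ k ∂blockMeasure ν n) / VarSeqR ν n) atTop
      (𝓝 (v (k + 2) - 2 * v (k + 1) + v k)) := by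
  have herror : Tendsto (fun n => (VarSeqR ν ((k + 2) * n) - 2 * VarSeqR ν ((k + 1) * n) +
      VarSeqR ν (k * n) - ∫ w, w ^ k ∂blockMeasure ν n) / VarSeqR ν n) atTop (𝓝 0) := by
    refine squeeze_zero_norm' ?_ (hinf.const_div_atTop (8 * ν.real univ))
    filter_upwards [hinf.eventually_gt_atTop 0] with n hn
    rw [norm_div, Real.norm_eq_abs, Real.norm_of_nonneg hn.le]
    gcongr
    exact abs_varSeqR_second_diff_sub_le hν n k
  have hlim := (((hv (k + 2)).sub ((hv (k + 1)).const_mul 2)).add (hv k)).sub herror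
  rw [sub_zero] at hlim
  exact hlim.congr fun n => by ring

end BlockMeasure

/-! ### Test functions for the block measures -/

section TestFunctions

lemma sub_one_mul_dslope_log (l : ℝ) : (l - 1) * dslope Real.log 1 l = Real.log l := by
  simpa using sub_smul_dslope Real.log 1 l

lemma dslope_log_one_one : dslope Real.log 1 1 = 1 := by
  rw [dslope_same, Real.deriv_log, inv_one]

lemma continuousOn_dslope_log_one : ContinuousOn (dslope Real.log 1) (Ioi 0) :=
  (continuousOn_dslope (Ioi_mem_nhds one_pos)).2
    ⟨Real.continuousOn_log.mono fun _ hl => ne_of_gt hl, Real.differentiableAt_log one_ne_zero⟩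

lemma geom_sum_mul_dslope_log_pow (n : ℕ) (l : ℝ) :
    (∑ i ∈ Finset.range n, l ^ i) * dslope Real.log 1 (l ^ n) = n * dslope Real.log 1 l := by
  rcases eq_or_ne l 1 with rfl | hl
  · simp
  refine mul_left_cancel₀ (sub_ne_zero.2 hl) ?_
  calc (l - 1) * ((∑ i ∈ Finset.range n, l ^ i) * dslope Real.log 1 (l ^ n))
      = (l ^ n - 1) * dslope Real.log 1 (l ^ n) := by rw [← geom_sum_mul]; ring
    _ = n * ((l - 1) * dslope Real.log 1 l) := by
        rw [sub_one_mul_dslope_log, sub_one_mul_dslope_log, Real.log_pow]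
    _ = (l - 1) * (n * dslope Real.log 1 l) := by ring

lemma exists_continuous_mul_dslope_log_sq {a b : ℝ} (hab : a < b) :
    ∃ f g : ℝ → ℝ, Continuous f ∧ (∀ w, f w = g w * dslope Real.log 1 w ^ 2) ∧
      (∀ w, g w ∈ Icc 0 1) ∧ (∀ w ≤ Real.exp (-b), g w = 0) ∧ ∀ w ≥ Real.exp (-a), g w = 1 := by
  obtain ⟨g, hg0, hg1, hg⟩ := exists_continuous_zero_one_of_isClosed
    (isClosed_Iic (a := Real.exp (-b))) (isClosed_Ici (a := Real.exp (-a)))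
    (Iic_disjoint_Ici.2 (not_le.2 (Real.exp_lt_exp.2 (neg_lt_neg hab))))
  have hcont : Continuous fun w => dslope Real.log 1 (max w (Real.exp (-b))) :=
    continuousOn_dslope_log_one.comp_continuous (by fun_prop)
      fun w => lt_max_of_lt_right (Real.exp_pos _)
  refine ⟨fun w => g w * dslope Real.log 1 (max w (Real.exp (-b))) ^ 2, g,
    g.continuous.mul (hcont.pow 2), fun w => ?_, hg, fun w hw => hg0 hw, fun w hw => hg1 hw⟩
  dsimp only
  rcases le_total w (Real.exp (-b)) with hw | hw
  · rw [hg0 hw, Pi.zero_apply, zero_mul, zero_mul]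
  · rw [max_eq_left hw]

lemma eventually_mul_dslope_log_sq_mem_Icc (b : ℝ) {ε : ℝ} (hε : 0 < ε) :
    ∀ᶠ n : ℕ in atTop, ∀ l ∈ Ioc (Real.exp (-(b / n))) 1,
      l * dslope Real.log 1 l ^ 2 ∈ Icc (1 - ε) (1 + ε) := by
  have hcont : ContinuousAt (fun l => l * dslope Real.log 1 l ^ 2) 1 :=
    continuousAt_id.mul ((continuousOn_dslope_log_one.continuousAt (Ioi_mem_nhds one_pos)).pow 2)
  have hnear := Metric.continuousAt_iff'.1 hcont ε hε
  obtain ⟨δ, hδ, hball⟩ := Metric.eventually_nhds_iff.1 hnear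
  have hexp : Tendsto (fun n : ℕ => Real.exp (-(b / n))) atTop (𝓝 1) := by
    simpa [Function.comp_def] using
      (Real.continuous_exp.tendsto _).comp (tendsto_const_div_atTop_nhds_zero_nat b).neg
  filter_upwards [hexp.eventually_const_lt (sub_lt_self 1 hδ)] with n hn l hl
  have hdist := hball (y := l) (by rw [Real.dist_eq, abs_lt]; constructor <;> linarith [hl.1, hl.2])
  rw [dslope_log_one_one, Real.dist_eq, abs_lt] at hdist
  constructor <;> linarith

lemma exp_neg_div_natCast_pow (a : ℝ) {n : ℕ} (hn : n ≠ 0) :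
    Real.exp (-(a / n)) ^ n = Real.exp (-a) := by
  rw [← Real.exp_nat_mul]
  congr 1
  field_simp

/- Multiplying by `dslope log 1 (l ^ n) ^ 2` turns the density of the block measure into
`2 n² l (dslope log 1 l)²`, which is about `2 n²` near `l = 1`. -/
lemma exists_continuous_indicator_le_le {a b ε : ℝ} (hab : a < b) (hε : ε ∈ Ioo 0 1) :
    ∃ f : ℝ → ℝ, Continuous f ∧ ∀ᶠ n : ℕ in atTop, ∀ l ∈ Ioc 0 1,
      (Ioc (Real.exp (-(a / n))) 1).indicator (fun _ => (1 - ε) * (2 * n ^ 2)) l ≤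
          2 * l * (∑ i ∈ Finset.range n, l ^ i) ^ 2 * f (l ^ n) ∧
        2 * l * (∑ i ∈ Finset.range n, l ^ i) ^ 2 * f (l ^ n) ≤
          (Ioc (Real.exp (-(b / n))) 1).indicator (fun _ => (1 + ε) * (2 * n ^ 2)) l := by
  obtain ⟨f, g, hf, hfg, hg, hg0, hg1⟩ := exists_continuous_mul_dslope_log_sq hab
  refine ⟨f, hf, ?_⟩
  filter_upwards [eventually_mul_dslope_log_sq_mem_Icc b hε.1, eventually_gt_atTop 0]
    with n hn hn0 l hl
  have heq : 2 * l * (∑ i ∈ Finset.range n, l ^ i) ^ 2 * f (l ^ n) =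
      g (l ^ n) * (l * dslope Real.log 1 l ^ 2) * (2 * n ^ 2) := by
    rw [hfg]
    linear_combination (2 * l * g (l ^ n)) *
      congrArg (· ^ 2) (geom_sum_mul_dslope_log_pow n l)
  rw [heq]
  obtain ⟨hgn0, hgn1⟩ := hg (l ^ n)
  have hq0 : 0 ≤ l * dslope Real.log 1 l ^ 2 := mul_nonneg hl.1.le (sq_nonneg _)
  constructor
  · refine indicator_apply_le' (fun hla => ?_) fun _ => by positivity
    have hlb : l ∈ Ioc (Real.exp (-(b / n))) 1 := ⟨lt_of_le_of_lt (by gcongr) hla.1, hla.2⟩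
    rw [hg1 _ ?_, one_mul]
    · gcongr
      exact (hn l hlb).1
    · rw [← exp_neg_div_natCast_pow a hn0.ne']
      gcongr
      exact hla.1.le
  · by_cases hlb : l ∈ Ioc (Real.exp (-(b / n))) 1
    · rw [indicator_of_mem hlb]
      gcongr
      exact (mul_le_of_le_one_left hq0 hgn1).trans (hn l hlb).2
    · rw [indicator_of_notMem hlb, hg0, zero_mul, zero_mul]
      rw [← exp_neg_div_natCast_pow b hn0.ne']
      have : l ≤ Real.exp (-(b / n)) := not_lt.1 fun h => hlb ⟨h, hl.2⟩
      have := hl.1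
      gcongr

lemma setIntegral_indicator_const_Ioc_exp (ν : Measure ℝ) (x c : ℝ) :
    ∫ l in Ioc 0 1, (Ioc (Real.exp (-x)) 1).indicator (fun _ => c) l ∂ν = c * logTail ν x := by
  rw [setIntegral_indicator measurableSet_Ioc, inter_eq_self_of_subset_right
    (Ioc_subset_Ioc_left (Real.exp_pos _).le), setIntegral_const, smul_eq_mul, mul_comm, logTail]

lemma exists_continuous_logTail_le_integral_blockMeasure_le {a b ε : ℝ} (hab : a < b)
    (hε : ε ∈ Ioo 0 1) : ∃ f : ℝ → ℝ, Continuous f ∧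
      ∀ (ν : Measure ℝ) [IsFiniteMeasure ν], ∀ᶠ n : ℕ in atTop,
        ∫ w, f w ∂blockMeasure ν n ∈
          Icc ((1 - ε) * (2 * n ^ 2) * logTail ν (a / n))
            ((1 + ε) * (2 * n ^ 2) * logTail ν (b / n)) := by
  obtain ⟨f, hf, hbound⟩ := exists_continuous_indicator_le_le hab hε
  refine ⟨f, hf, fun ν _ => ?_⟩
  filter_upwards [hbound] with n hn
  have hint : IntegrableOn
      (fun l => 2 * l * (∑ i ∈ Finset.range n, l ^ i) ^ 2 * f (l ^ n)) (Ioc 0 1) ν :=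
    (ContinuousOn.integrableOn_compact isCompact_Icc (by fun_prop)).mono_set Ioc_subset_Icc_self
  have hind (x c : ℝ) :
      IntegrableOn ((Ioc (Real.exp (-x)) 1).indicator fun _ => c) (Ioc 0 1) ν :=
    ((integrable_const c).indicator measurableSet_Ioc).integrableOn
  rw [integral_blockMeasure n hf, ← setIntegral_indicator_const_Ioc_exp,
    ← setIntegral_indicator_const_Ioc_exp]
  exact ⟨setIntegral_mono_on (hind _ _) hint measurableSet_Ioc fun l hl => (hn l hl).1,
    setIntegral_mono_on hint (hind _ _) measurableSet_Ioc fun l hl => (hn l hl).2⟩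

end TestFunctions

/-! ### Comparison with a reference measure -/

section Comparison

variable {ν μ : Measure ℝ} [IsFiniteMeasure ν] [IsFiniteMeasure μ] {v : ℕ → ℝ}

lemma eventually_logTail_div_varSeqR_le (hν : ν (Icc (-1) 1)ᶜ = 0) (hμ : μ (Icc (-1) 1)ᶜ = 0)
    (hνinf : Tendsto (VarSeqR ν) atTop atTop) (hμinf : Tendsto (VarSeqR μ) atTop atTop)
    (hνv : ∀ k, Tendsto (fun n => VarSeqR ν (k * n) / VarSeqR ν n) atTop (𝓝 (v k)))
    (hμv : ∀ k, Tendsto (fun n => VarSeqR μ (k * n) / VarSeqR μ n) atTop (𝓝 (v k)))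
    {a b t : ℝ} (hab : a < b) (ht : t ∈ Ioo 0 1) :
    ∀ᶠ n : ℕ in atTop, (1 - t) * (n ^ 2 * logTail ν (a / n) / VarSeqR ν n) ≤
      (1 + t) * (n ^ 2 * logTail μ (b / n) / VarSeqR μ n) + t := by
  obtain ⟨f, hf, hbound⟩ := exists_continuous_logTail_le_integral_blockMeasure_le hab ht
  have hνpos := hνinf.eventually_gt_atTop 0
  have hμpos := hμinf.eventually_gt_atTop 0
  have hdiff := tendsto_integral_div_sub_integral_div (fun n => blockMeasure_compl_Icc n) hνpos
    (tendsto_moment_blockMeasure_div hν hνinf hνv) (fun n => blockMeasure_compl_Icc n) hμpos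
    (tendsto_moment_blockMeasure_div hμ hμinf hμv) hf
  filter_upwards [hdiff.eventually_lt_const ht.1, hbound ν, hbound μ, hνpos, hμpos]
    with n hn hlow hup hVν hVμ
  have hlow' := div_le_div_of_nonneg_right hlow.1 hVν.le
  have hup' := div_le_div_of_nonneg_right hup.2 hVμ.le
  have hνn : (1 - t) * (n ^ 2 * logTail ν (a / n) / VarSeqR ν n) =
      (1 - t) * (2 * n ^ 2) * logTail ν (a / n) / VarSeqR ν n / 2 := by ring
  have hμn : (1 + t) * (n ^ 2 * logTail μ (b / n) / VarSeqR μ n) =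
      (1 + t) * (2 * n ^ 2) * logTail μ (b / n) / VarSeqR μ n / 2 := by ring
  linarith [ht.1]

lemma tendsto_logTail_div_varSeqR_of_comparison
    (hν : ν (Icc (-1) 1)ᶜ = 0) (hμ : μ (Icc (-1) 1)ᶜ = 0)
    (hνinf : Tendsto (VarSeqR ν) atTop atTop) (hμinf : Tendsto (VarSeqR μ) atTop atTop)
    (hνv : ∀ k, Tendsto (fun n => VarSeqR ν (k * n) / VarSeqR ν n) atTop (𝓝 (v k)))
    (hμv : ∀ k, Tendsto (fun n => VarSeqR μ (k * n) / VarSeqR μ n) atTop (𝓝 (v k)))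
    {G : ℝ → ℝ} (hG : ContinuousAt G 1)
    (hμG : ∀ y > 0, Tendsto (fun n : ℕ => n ^ 2 * logTail μ (y / n) / VarSeqR μ n) atTop
      (𝓝 (G y))) :
    Tendsto (fun n : ℕ => n ^ 2 * logTail ν (1 / n) / VarSeqR ν n) atTop (𝓝 (G 1)) := by
  -- Comparing at `1 - t` and `1 + t` squeezes the quotient between about `φ t` and `φ (-t)`.
  let φ (s : ℝ) : ℝ := ((1 - s) * G (1 - s) - s) / (1 + s)
  have hφ : Tendsto φ (𝓝 0) (𝓝 (G 1)) := by
    have hid : Tendsto (fun s : ℝ => s) (𝓝 0) (𝓝 0) := tendsto_id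
    have hsub : Tendsto (fun s : ℝ => 1 - s) (𝓝 0) (𝓝 1) := by simpa using hid.const_sub 1
    simpa [φ, Pi.div_def] using
      ((hsub.mul (hG.tendsto.comp hsub)).sub hid).div (hid.const_add 1) (by norm_num)
  have hφneg : Tendsto (fun s => φ (-s)) (𝓝 0) (𝓝 (G 1)) := hφ.comp <| by
    simpa using (continuous_neg (G := ℝ)).tendsto 0
  have hμφ (s : ℝ) (hs : s < 1) := (((hμG (1 - s) (sub_pos.2 hs)).const_mul (1 - s)).sub_const
    s).div_const (1 + s)
  have hsmall : ∀ᶠ t : ℝ in 𝓝[>] 0, t ∈ Ioo 0 1 := Ioo_mem_nhdsGT one_pos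
  refine tendsto_order.2 ⟨fun c hc => ?_, fun c hc => ?_⟩
  · obtain ⟨t, hct, ht⟩ :=
      (((hφ.mono_left nhdsWithin_le_nhds).eventually_const_lt hc).and hsmall).exists
    filter_upwards [(hμφ t ht.2).eventually_const_lt hct,
      eventually_logTail_div_varSeqR_le hμ hν hμinf hνinf hμv hνv (sub_lt_self 1 ht.1) ht]
      with n hn hcomp
    exact hn.trans_le ((div_le_iff₀' (by linarith [ht.1])).2 (by linarith))
  · obtain ⟨t, hct, ht⟩ :=
      (((hφneg.mono_left nhdsWithin_le_nhds).eventually_lt_const hc).and hsmall).exists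
    filter_upwards [(hμφ (-t) (by linarith [ht.1])).eventually_lt_const hct,
      eventually_logTail_div_varSeqR_le hν hμ hνinf hμinf hνv hμv
        (show (1 : ℝ) < 1 - -t by linarith [ht.1]) ht]
      with n hn hcomp
    refine lt_of_le_of_lt ((le_div_iff₀' (by linarith [ht.2])).2 ?_) hn
    linarith

end Comparison

/-! ### From the variance to the tail -/

section Tauberian

variable {β : ℝ}

/-- The probability measure on `(0, 1]` whose logarithmic tail is `x ^ β` for `x ≤ 1`: the law of
`exp (-U ^ (1 / β))` for `U` uniform on `[0, 1]`. -/
noncomputable def powerTailMeasure (β : ℝ) : Measure ℝ :=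
  (volume.restrict (Icc 0 1)).map fun u => Real.exp (-u ^ β⁻¹)

instance isFiniteMeasure_powerTailMeasure : IsFiniteMeasure (powerTailMeasure β) :=
  Measure.isFiniteMeasure_map _ _

lemma powerTailMeasure_compl_Icc (β : ℝ) : powerTailMeasure β (Icc (-1) 1)ᶜ = 0 := by
  refine ae_iff.1 ((ae_map_iff (by fun_prop) measurableSet_Icc).2 ?_)
  filter_upwards [ae_restrict_mem measurableSet_Icc] with u hu
  have hpow := Real.rpow_nonneg hu.1 β⁻¹
  exact ⟨by linarith [Real.exp_pos (-u ^ β⁻¹)], Real.exp_le_one_iff.2 (neg_nonpos.2 hpow)⟩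

lemma logTail_powerTailMeasure (hβ : 0 < β) {x : ℝ} (hx : x ∈ Ioc 0 1) :
    logTail (powerTailMeasure β) x = x ^ β := by
  have hpre : (fun u => Real.exp (-u ^ β⁻¹)) ⁻¹' Ioc (Real.exp (-x)) 1 ∩ Icc 0 1 =
      Ico 0 (x ^ β) := by
    ext u
    simp only [mem_inter_iff, mem_preimage, mem_Ioc, mem_Icc, mem_Ico, Real.exp_lt_exp,
      Real.exp_le_one_iff, neg_lt_neg_iff, neg_nonpos]
    constructor
    · rintro ⟨⟨hux, -⟩, hu0, -⟩
      exact ⟨hu0, (Real.rpow_inv_lt_iff_of_pos hu0 hx.1.le hβ).1 hux⟩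
    · rintro ⟨hu0, hux⟩
      exact ⟨⟨(Real.rpow_inv_lt_iff_of_pos hu0 hx.1.le hβ).2 hux, Real.rpow_nonneg hu0 _⟩, hu0,
        hux.le.trans (Real.rpow_le_one hx.1.le hx.2 hβ.le)⟩
  rw [logTail, powerTailMeasure, map_measureReal_apply (by fun_prop) measurableSet_Ioc,
    measureReal_restrict_apply (measurableSet_Ioc.preimage (by fun_prop)), hpre,
    Real.volume_real_Ico_of_le (Real.rpow_nonneg hx.1.le β), sub_zero]

variable {h : ℝ → ℝ}

lemma natCast_sq_mul_regVarModel_one_div (h : ℝ → ℝ) (β : ℝ) {n : ℕ} (hn : n ≠ 0) :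
    n ^ 2 * regVarModel h β (1 / n) = n ^ (2 - β) * h n := by
  have hn' : (0 : ℝ) < n := by positivity
  rw [regVarModel, one_div_one_div, one_div, Real.inv_rpow hn'.le, Real.rpow_sub hn',
    Real.rpow_two]
  ring

lemma SlowlyVaryingAtTop.tendsto_natCast_sq_mul_regVarModel_atTop (hh : SlowlyVaryingAtTop h)
    (hβ : β < 2) : Tendsto (fun n : ℕ => n ^ 2 * regVarModel h β (1 / n)) atTop atTop := by
  refine ((hh.tendsto_rpow_mul_atTop (sub_pos.2 hβ)).comp tendsto_natCast_atTop_atTop).congr' ?_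
  filter_upwards [eventually_ne_atTop 0] with n hn
  exact (natCast_sq_mul_regVarModel_one_div h β hn).symm

lemma SlowlyVaryingAtTop.tendsto_mul_div_of_tendsto_div_regVarModel (hh : SlowlyVaryingAtTop h)
    {V : ℕ → ℝ} (hV0 : V 0 = 0) {c : ℝ} (hc : c ≠ 0)
    (hV : Tendsto (fun n : ℕ => V n / (n ^ 2 * regVarModel h β (1 / n))) atTop (𝓝 c)) (k : ℕ) :
    Tendsto (fun n => V (k * n) / V n) atTop (𝓝 (k ^ 2 * (1 / k) ^ β)) := by
  rcases k.eq_zero_or_pos with rfl | hk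
  · simp [hV0]
  have hVk := hV.comp (tendsto_id.const_mul_atTop' hk)
  have hmodel : Tendsto (fun n : ℕ => regVarModel h β (1 / (k * n : ℕ)) / regVarModel h β (1 / n))
      atTop (𝓝 ((1 / k) ^ β)) := by
    refine hh.tendsto_regVarModel_div β tendsto_one_div_natCast_nhdsGT_zero (by positivity) ?_
    refine tendsto_const_nhds.congr' ?_
    filter_upwards [eventually_ne_atTop 0] with n hn
    push_cast
    field_simp
  have hlim := ((hVk.div hV hc).mul hmodel).const_mul ((k : ℝ) ^ 2)
  rw [div_self hc, one_mul] at hlim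
  refine hlim.congr' ?_
  filter_upwards [eventually_gt_atTop 0] with n hn
  have hpos (j : ℕ) (hj : 0 < j) : 0 < regVarModel h β (1 / j) :=
    hh.regVarModel_pos β (by positivity)
  have hn := hpos n hn
  have hkn := hpos (k * n) (Nat.mul_pos hk ‹_›)
  simp only [Pi.div_apply, Function.comp_apply, id_eq]
  push_cast at hkn ⊢
  field_simp

lemma tendsto_varSeqR_atTop {ν : Measure ℝ} (hh : SlowlyVaryingAtTop h) (hβ : β < 2) {c : ℝ}
    (hc : 0 < c)
    (hV : Tendsto (fun n : ℕ => VarSeqR ν n / (n ^ 2 * regVarModel h β (1 / n))) atTop (𝓝 c)) :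
    Tendsto (VarSeqR ν) atTop atTop := by
  have hmodel := hh.tendsto_natCast_sq_mul_regVarModel_atTop hβ
  refine (hV.pos_mul_atTop hc hmodel).congr' ?_
  filter_upwards [hmodel.eventually_gt_atTop 0] with n hn
  exact div_mul_cancel₀ _ hn.ne'

lemma varSeqR_zero (ν : Measure ℝ) : VarSeqR ν 0 = 0 := by simp [VarSeqR]

lemma slowlyVaryingAtTop_const {c : ℝ} (hc : 0 < c) : SlowlyVaryingAtTop fun _ => c :=
  ⟨fun _ _ => hc, continuousOn_const, fun _ _ => by simp [hc.ne']⟩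

lemma tendsto_logTail_powerTailMeasure_div (hβ : 0 < β) :
    Tendsto (fun x => logTail (powerTailMeasure β) x / regVarModel (fun _ => 1) β x) (𝓝[>] 0)
      (𝓝 1) := by
  refine tendsto_const_nhds.congr' ?_
  filter_upwards [Ioo_mem_nhdsGT one_pos] with x hx
  rw [logTail_powerTailMeasure hβ (Ioo_subset_Ioc_self hx), regVarModel, mul_one,
    div_self (Real.rpow_pos_of_pos hx.1 β).ne']

lemma SlowlyVaryingAtTop.tendsto_logTail_div_regVarModel {ν : Measure ℝ} [IsFiniteMeasure ν]
    (hν : ν (Icc (-1) 1)ᶜ = 0) (hh : SlowlyVaryingAtTop h) (hβ : β ∈ Ioo 0 1) {c : ℝ} (hc : 0 < c)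
    (hV : Tendsto (fun n : ℕ => VarSeqR ν n / (n ^ 2 * regVarModel h β (1 / n))) atTop (𝓝 c)) :
    Tendsto (fun x => logTail ν x / regVarModel h β x) (𝓝[>] 0) (𝓝 (c / varTailConst β)) := by
  have hβ' : β ∈ Ioo (-1) 1 := ⟨by linarith [hβ.1], hβ.2⟩
  have hβ2 : β < 2 := by linarith [hβ.2]
  have hμ := powerTailMeasure_compl_Icc β
  have hone := slowlyVaryingAtTop_const one_pos
  have hF := tendsto_logTail_powerTailMeasure_div hβ.1
  have hVμ := hone.tendsto_varSeqR_div_regVarModel hμ hβ' one_ne_zero hF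
  rw [mul_one] at hVμ
  have hK := varTailConst_pos hβ'
  have hreg := hone.regularlyVaryingAtZero_of_tendsto_div one_ne_zero hF
  have hinf := tendsto_varSeqR_atTop hh hβ2 hc hV
  have hcomp := tendsto_logTail_div_varSeqR_of_comparison hν hμ hinf
    (tendsto_varSeqR_atTop hone hβ2 hK hVμ)
    (hh.tendsto_mul_div_of_tendsto_div_regVarModel (varSeqR_zero ν) hc.ne' hV)
    (hone.tendsto_mul_div_of_tendsto_div_regVarModel (varSeqR_zero _) hK.ne' hVμ)
    ((Real.continuousAt_rpow_const 1 β (Or.inl one_ne_zero)).div_const (varTailConst β))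
    fun y hy => hreg.tendsto_logTail_div_varSeqR hμ hβ' hy
  rw [Real.one_rpow] at hcomp
  refine hh.tendsto_div_regVarModel_of_nat logTail_mono ?_
  rw [div_eq_mul_one_div, mul_comm]
  refine (hcomp.mul hV).congr' ?_
  filter_upwards [hinf.eventually_ne_atTop 0, eventually_ne_atTop 0] with n hVn hn
  field_simp

end Tauberian

/-! ### The equivalence -/

section Main

variable {ν : Measure ℝ} [IsFiniteMeasure ν] {h : ℝ → ℝ} {β : ℝ}

lemma SlowlyVaryingAtTop.tendsto_varSeqR_div_iff (hν : ν (Icc (-1) 1)ᶜ = 0)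
    (hh : SlowlyVaryingAtTop h) (hβ : β ∈ Ioo 0 1) {d : ℝ} (hd : 0 < d) :
    Tendsto (fun n : ℕ => VarSeqR ν n / (n ^ (2 - β) * h n)) atTop (𝓝 (varTailConst β * d)) ↔
      Tendsto (fun x => logTail ν x / regVarModel h β x) (𝓝[>] 0) (𝓝 d) := by
  have hβ' : β ∈ Ioo (-1) 1 := ⟨by linarith [hβ.1], hβ.2⟩
  have hK := varTailConst_pos hβ'
  have hmodel : (fun n : ℕ => VarSeqR ν n / (n ^ (2 - β) * h n)) =ᶠ[atTop]
      fun n : ℕ => VarSeqR ν n / (n ^ 2 * regVarModel h β (1 / n)) := by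
    filter_upwards [eventually_ne_atTop 0] with n hn
    rw [natCast_sq_mul_regVarModel_one_div h β hn]
  rw [tendsto_congr' hmodel]
  refine ⟨fun hV => ?_, hh.tendsto_varSeqR_div_regVarModel hν hβ' hd.ne'⟩
  have hF := hh.tendsto_logTail_div_regVarModel hν hβ (mul_pos hK hd) hV
  rwa [mul_div_cancel_left₀ _ hK.ne'] at hF

lemma tendsto_div_nhds_iff_div_const_mul {ι : Type*} {l : Filter ι} {u v : ι → ℝ} {c : ℝ}
    (hc : c ≠ 0) :
    Tendsto (fun i => u i / v i) l (𝓝 c) ↔ Tendsto (fun i => u i / (c * v i)) l (𝓝 1) := by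
  rw [← tendsto_const_smul_iff₀ hc (a := 1)]
  simp only [smul_eq_mul, mul_one, ← mul_div_assoc, mul_div_mul_left _ _ hc]

lemma measureReal_Ioc_one_sub_eq_logTail (ν : Measure ℝ) {x : ℝ} (hx : x < 1) :
    ν.real (Ioc (1 - x) 1) = logTail ν (-Real.log (1 - x)) := by
  rw [logTail, neg_neg, Real.exp_log (sub_pos.2 hx)]

lemma tendsto_neg_log_one_sub_div :
    Tendsto (fun x => -Real.log (1 - x) / x) (𝓝[>] 0) (𝓝 1) := by
  have hderiv : HasDerivAt (fun x => -Real.log (1 - x)) 1 0 := by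
    simpa using (((hasDerivAt_id (0 : ℝ)).const_sub 1).log (by norm_num)).fun_neg
  simpa [div_eq_inv_mul] using hderiv.tendsto_slope_zero_right

lemma tendsto_one_sub_exp_neg_div :
    Tendsto (fun x => (1 - Real.exp (-x)) / x) (𝓝[>] 0) (𝓝 1) := by
  have hderiv : HasDerivAt (fun x => 1 - Real.exp (-x)) 1 0 := by
    simpa using ((hasDerivAt_id (0 : ℝ)).neg.exp).const_sub 1
  simpa [div_eq_inv_mul] using hderiv.tendsto_slope_zero_right

lemma SlowlyVaryingAtTop.tendsto_logTail_div_iff (hh : SlowlyVaryingAtTop h) (ν : Measure ℝ)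
    {d : ℝ} :
    Tendsto (fun x => logTail ν x / regVarModel h β x) (𝓝[>] 0) (𝓝 d) ↔
      Tendsto (fun x => ν.real (Ioc (1 - x) 1) / regVarModel h β x) (𝓝[>] 0) (𝓝 d) := by
  have hexp (x : ℝ) : ν.real (Ioc (1 - (1 - Real.exp (-x))) 1) = logTail ν x := by
    rw [sub_sub_cancel, logTail]
  constructor <;> intro hF
  · have hlim := hh.tendsto_div_regVarModel_comp hF tendsto_id one_pos tendsto_neg_log_one_sub_div
    rw [Real.one_rpow, mul_one] at hlim
    refine hlim.congr' ?_
    filter_upwards [Ioo_mem_nhdsGT one_pos] with x hx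
    rw [measureReal_Ioc_one_sub_eq_logTail ν hx.2, id]
  · have hlim := hh.tendsto_div_regVarModel_comp hF tendsto_id one_pos tendsto_one_sub_exp_neg_div
    simpa only [Real.one_rpow, mul_one, hexp, id] using hlim

end Main

theorem reversible_variance_iff_nu_tail_regularly_varying_general
    (ν : Measure ℝ) [IsFiniteMeasure ν] (hsupp : ν (Set.Icc (-1 : ℝ) 1)ᶜ = 0)
    (α : ℝ) (hα : α ∈ Set.Ioo (1 : ℝ) 2) (h : ℝ → ℝ) (hh : SlowlyVaryingAtTop h)
    (d : ℝ) (hd : d = α * (α - 1) / (2 * Real.Gamma (3 - α))) :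
    Tendsto (fun n : ℕ => VarSeqR ν n / ((n : ℝ) ^ α * h n)) atTop (𝓝 1) ↔
      Tendsto (fun x : ℝ => (ν (Set.Ioc (1 - x) 1)).toReal / (d * x ^ (2 - α) * h (1/x)))
        (𝓝[>] (0:ℝ)) (𝓝 1) := by
  have hβ : 2 - α ∈ Ioo 0 1 := ⟨by linarith [hα.2], by linarith [hα.1]⟩
  have hK : 0 < varTailConst (2 - α) := varTailConst_pos ⟨by linarith [hβ.1], hβ.2⟩
  have hdK : d = (varTailConst (2 - α))⁻¹ := by
    rw [hd, varTailConst, inv_div]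
    ring_nf
  have hd0 : 0 < d := hdK ▸ inv_pos.2 hK
  have hiff := (hh.tendsto_varSeqR_div_iff hsupp hβ hd0).trans (hh.tendsto_logTail_div_iff ν)
  rw [hdK, mul_inv_cancel₀ hK.ne', sub_sub_cancel, ← hdK] at hiff
  simpa only [regVarModel, measureReal_def, mul_assoc] using
    hiff.trans (tendsto_div_nhds_iff_div_const_mul hd0.ne')

/-- **Theorem 2.7 (second part).**  Let `ν` be a finite measure on `[-1,1]`
(transition spectral measure of a reversible Markov chain) with
`Var_n/n → ∞`.  For `α ∈ (1,2)`, `h` slowly varying and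
`d_α = α(α-1)/(2Γ(3-α))`: `Var_n ~ n^α h(n)` as `n → ∞` iff
`ν((1-x,1]) ~ d_α x^{2-α} h(1/x)` as `x → 0⁺`. -/
theorem reversible_variance_iff_nu_tail_regularly_varying
    (ν : Measure ℝ) [IsFiniteMeasure ν]
    (hsupp : ν (Set.Icc (-1 : ℝ) 1)ᶜ = 0)
    (hinf : Tendsto (fun n : ℕ => VarSeqR ν n / (n : ℝ)) atTop atTop)
    (α : ℝ) (hα : α ∈ Set.Ioo (1:ℝ) 2)
    (h : ℝ → ℝ) (hh : SlowlyVaryingAtTop h)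
    (d : ℝ) (hd : d = α * (α - 1) / (2 * Real.Gamma (3 - α))) :
    Tendsto (fun n : ℕ => VarSeqR ν n / ((n : ℝ) ^ α * h n)) atTop (𝓝 1) ↔
      Tendsto (fun x : ℝ => (ν (Set.Ioc (1 - x) 1)).toReal / (d * x ^ (2 - α) * h (1/x)))
        (𝓝[>] (0:ℝ)) (𝓝 1) :=
  reversible_variance_iff_nu_tail_regularly_varying_general ν hsupp α hα h hh d hd
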